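/- Let m, p, N be positive integers and let ζ be a complex number with ζ^N = 1. Set ξ = ζ^{−1}. Then ζ · Σ_{N−1 ≥ n_{2mp−1} ≥ ⋯ ≥ n_1 ≥ 0} (ζ;ζ)_{n_{2mp−1}} (−1)^{n_{2mp−1}} ζ^{−n_{2mp−1}(n_{2mp−1}+1)/2} · ∏_{1 ≤ i < j ≤ 2mp−1, m ∤ i} ζ^{ε_{i,j,m} n_i n_j} · ∏_{i=1}^{2p−1} (−1)^{n_{mi}} ζ^{n_{mi}(n_{mi}+1)/2} · ∏_{i=1}^{2mp−2} ζ^{−n_i n_{i+1} + γ_{i,m} n_i} [n_{i+1}; n_i]_ζ = Σ_{N−1 ≥ n ≥ 0, n = n_m ≥ n_{m−1} ≥ ⋯ ≥ n_1 ≥ 0, n = s_p ≥ s_{p−1} ≥ ⋯ ≥ s_1 ≥ 0} ((ξ;ξ)_n)² ξ^n ∏_{i=1}^{m−1} ξ^{n_i²+n_i} [n_{i+1}; n_i]_ξ ∏_{j=1}^{p−1} ξ^{s_j²+s_j} [s_{j+1}; s_j]_ξ. (The left-hand side is the generalized Kontsevich–Zagier function F_{m,p}(ζ) and the right-hand side is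 the generalized U-function U_{m,p}(−1; ζ^{−1}); truncating both sums at N−1 loses nothing since (ζ;ζ)_n = 0 for n ≥ N.) -/

import Mathlib

open Finset

noncomputable section

/-- The q-Pochhammer symbol `(a; q)_n = ∏_{k=0}^{n-1} (1 - a q^k)`. -/
def qPoch (a q : ℂ) (n : ℕ) : ℂ := ∏ k ∈ Finset.range n, (1 - a * q ^ k)

/-- The Gaussian binomial coefficient `[n; k]_q` as a polynomial in `q` over `ℤ`,
defined by the q-Pascal rule `[n; k] = [n-1; k-1] + q^k [n-1; k]`.  It is the
polynomial equal to `(q;q)_n / ((q;q)_{n-k} (q;q)_k)`. -/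
def gaussPoly : ℕ → ℕ → Polynomial ℤ
  | _, 0 => 1
  | 0, _ + 1 => 0
  | n + 1, k + 1 => gaussPoly n k + Polynomial.X ^ (k + 1) * gaussPoly n (k + 1)

/-- The Gaussian binomial coefficient `[n; k]_q` evaluated at `q : ℂ`. -/
def gbin (q : ℂ) (n k : ℕ) : ℂ := Polynomial.aeval q (gaussPoly n k)

/-- `σ_j = (-1)^⌊(2j-1)t/l⌋`. -/
def sigmaT (l t j : ℕ) : ℤ := (-1) ^ ((2 * j - 1) * t / l)

/-- `r(j)`: the unique integer with `r(j) ≡ (2j-1)t (mod 2l)` and `-l < r(j) < l`. -/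
def rT (l t j : ℕ) : ℤ :=
  if (((2 * j - 1) * t % (2 * l) : ℕ) : ℤ) < (l : ℤ) then (((2 * j - 1) * t % (2 * l) : ℕ) : ℤ)
  else (((2 * j - 1) * t % (2 * l) : ℕ) : ℤ) - 2 * (l : ℤ)

/-- `r'(j) = (|r(j)| + 1)/2`. -/
def rpT (l t j : ℕ) : ℕ := ((rT l t j).natAbs + 1) / 2

open Classical in
/-- `i_k`: the unique `j ∈ {1, …, (l-1)/2}` with `r'(j) = k`. -/
def iT (l t k : ℕ) : ℕ :=
  if h : ∃ j, j ∈ Finset.Icc 1 ((l - 1) / 2) ∧ rpT l t j = k then h.choose else 0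

/-- `ε_{i,j,m}`: `1` if `j ≡ -i, -i-1 (mod 2m)`, `-1` if `j ≡ i, i-1 (mod 2m)`,
`0` otherwise (and `0` when `m ∣ i`, a case excluded in all uses). -/
def epsLO (m i j : ℕ) : ℤ :=
  if m ∣ i then 0
  else if 2 * m ∣ (i + j) ∨ 2 * m ∣ (i + j + 1) then 1
  else if (2 * (m : ℤ)) ∣ ((j : ℤ) - (i : ℤ)) ∨ (2 * (m : ℤ)) ∣ ((j : ℤ) - (i : ℤ) + 1) then -1
  else 0

/-- `Δ_{i,j,m}`: `1` if `j ≡ -i, -i+1 (mod 2m)`, `-1` if `j ≡ i, i+1 (mod 2m)`,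
`0` otherwise (and `0` when `m ∣ i`, a case excluded in all uses). -/
def deltaLO (m i j : ℕ) : ℤ :=
  if m ∣ i then 0
  else if 2 * m ∣ (i + j) ∨ 2 * m ∣ (i + j - 1) then 1
  else if (2 * (m : ℤ)) ∣ ((j : ℤ) - (i : ℤ)) ∨ (2 * (m : ℤ)) ∣ ((j : ℤ) - (i : ℤ) - 1) then -1
  else 0

/-- `γ_{i,m} = 1` if `i ≡ 1, …, m-1 (mod 2m)` and `-1` otherwise. -/
def gamLO (m i : ℕ) : ℤ :=
  if 1 ≤ i % (2 * m) ∧ i % (2 * m) ≤ m - 1 then 1 else -1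

/-- `β_{i,m} = 1` if `i ≡ 1, …, m-1 (mod 2m)`, `-1` if `i ≡ m+1, …, 2m-1 (mod 2m)`,
and `0` if `m ∣ i`. -/
def betLO (m i : ℕ) : ℤ :=
  if 1 ≤ i % (2 * m) ∧ i % (2 * m) ≤ m - 1 then 1
  else if m + 1 ≤ i % (2 * m) ∧ i % (2 * m) ≤ 2 * m - 1 then -1
  else 0

/-- Extend a tuple `f : Fin P → Fin N` to `n : ℕ → ℕ` with `n i = f (i-1)` for
`1 ≤ i ≤ P` and `n i = 0` otherwise (in particular `n 0 = 0`). -/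
def extTup (P N : ℕ) (f : Fin P → Fin N) : ℕ → ℕ :=
  fun i => if h : 1 ≤ i ∧ i ≤ P then (f ⟨i - 1, by omega⟩ : ℕ) else 0

/-- Takata's exponent `a(n)` (an integer; every integer division below is exact). -/
def aT (l t : ℕ) (n : ℕ → ℕ) : ℤ :=
  -(∑ j ∈ Icc 1 ((l - 1) / 2), (∑ k ∈ Icc (rpT l t j) ((l - 1) / 2),
      (sigmaT l t (iT l t k) + sigmaT l t (iT l t ((l - 1) / 2 + 1 - k))) / 2) *
      ((n j : ℤ) - (n (j - 1) : ℤ)))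
  - ∑ j ∈ Icc 1 ((l - 1) / 2 - 1), ((sigmaT l t (j + 1) + sigmaT l t ((l - 1) / 2 + 1 - j)) / 2) * (n j : ℤ)
  - ((sigmaT l t ((l - 1) / 2) + 1) / 2) * (n ((l - 1) / 2) : ℤ)
  - ∑ j ∈ Icc 1 ((l - 1) / 2), sigmaT l t j

/-- Takata's exponent `b₁(n)` (an integer; every integer division below is exact
whenever the factor it multiplies is nonzero). -/
def b1T (l t : ℕ) (n : ℕ → ℕ) : ℤ :=
  -aT l t n
  + ∑ k ∈ Icc 1 ((l - t) / 2), ((1 - sigmaT l t (iT l t k)) / 2) * (n (iT l t k - 1) : ℤ)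
  - ∑ k ∈ Icc ((l - t) / 2 + 1) ((l - 1) / 2), (n (iT l t k - 1) : ℤ)
  + ∑ k ∈ Icc ((l - t) / 2 + 1) ((l - 1) / 2), ((1 + sigmaT l t (iT l t k)) / 2) * (n (iT l t k) : ℤ)
  - (1 + sigmaT l t ((l - 1) / 2)) * (n ((l - 1) / 2) : ℤ)
  + ∑ j ∈ Icc 1 ((l - 1) / 2 - 1), ((sigmaT l t (j + 1) - sigmaT l t j) / 2) * (n j : ℤ)
  - ∑ k ∈ Icc 1 ((l - 1) / 2 - 1), ∑ k' ∈ Icc (k + 1) ((l - 1) / 2),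
      ((1 + Int.sign ((iT l t k : ℤ) - (iT l t k' : ℤ))) / 2) *
        ((sigmaT l t (iT l t k) - sigmaT l t (iT l t k')) / 2) *
        ((n (iT l t k) : ℤ) - (n (iT l t k - 1) : ℤ)) *
        ((n (iT l t k') : ℤ) - (n (iT l t k' - 1) : ℤ))
  + ∑ j ∈ Icc 1 ((l - 1) / 2), sigmaT l t j *
      (∑ k ∈ Icc 1 (rpT l t j), ((n (iT l t k) : ℤ) - (n (iT l t k - 1) : ℤ))) * (n (j - 1) : ℤ)

/-- Takata's exponent `b₂(n)`. -/
def b2T (l t : ℕ) (n : ℕ → ℕ) : ℤ :=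
  if l < 2 * t then
    ∑ k ∈ Icc ((l - t) / 2 + 1) ((t - 1) / 2),
      ((1 + sigmaT l t (iT l t k)) / 2) * (n (iT l t k - 1) : ℤ)
  else
    -∑ k ∈ Icc ((t + 1) / 2 + 1) ((l - t) / 2),
      ((1 + sigmaT l t (iT l t k)) / 2) * (n (iT l t k - 1) : ℤ)

/-- Takata's `κ(p')`. -/
def kapT (l t N : ℕ) (n : ℕ → ℕ) : ℤ :=
  if sigmaT l t ((l - 1) / 2) = -1 then -(N : ℤ) * (n ((l - 1) / 2) : ℤ) else 0

/-- Takata's `τ(j)`. -/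
def tauT (l t : ℕ) (q : ℂ) (n : ℕ → ℕ) (j : ℕ) : ℂ :=
  if sigmaT l t j = -1 then (-1 : ℂ) ^ (n j - n (j - 1))
  else q ^ ((((n j : ℤ) - (n (j - 1) : ℤ)) * (((n j : ℤ) - (n (j - 1) : ℤ)) + 1)) / 2)

/-- Takata's `X(n)`. -/
def XT (l t N : ℕ) (q : ℂ) (n : ℕ → ℕ) : ℂ :=
  (-1 : ℂ) ^ (n ((l - 1) / 2)) * q ^ kapT l t N n *
    (qPoch q q (N - 1) * qPoch q q (n ((l - 1) / 2)) / qPoch q q (N - n ((l - 1) / 2) - 1)) *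
    ∏ j ∈ Icc 1 ((l - 1) / 2), tauT l t q n j / qPoch q q (n j - n (j - 1))

/-!
Put `q = ζ⁻¹` and rewrite the Kontsevich–Zagier summand in terms of `q`. Its prefactor `(q; q)_k`
in the largest variable `k` equals `q ^ (k (k + 1) + 1) ∑ M < N, q ^ M (q; q)_M [M; k]`, by a
telescoping sum that uses only `q ^ N = 1`. Thus a further variable `M` is put on top of the chain,
and its `2mp` links fall into `p` blocks of `2m`; the exponents `ε` and `γ` are `2m`-periodic.

Suppose that the blocks below a given one have been summed out, leaving an `m`-chain that hangs from
its bottom variable. The variables of index `i` and `2m - i` of the block form a level, and the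
levels are summed from the innermost one outwards: the middle variable by the `q`-binomial theorem,
and each pair `a ≤ b` by that theorem and the `q`-Pfaff–Saalschütz identity, which also replace the
corresponding variable `t` of the `m`-chain by `s = t + b - a`. Afterwards the chain hangs from the
top variable of the block. The coupling of the block to the earlier ones is odd under `i ↦ 2m - i`;
it enters their sum only as a shift of the linear terms in the exponents of the `m`-chain, and the
change of variables `t ↦ s` removes this shift. Each block leaves behind its bottom variable, and
these variables form the `p`-chain.
-/

lemma sum_range_eq_sum_range_add {M : Type*} [AddCommMonoid M] {f : ℕ → M} {a K N : ℕ}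
    (hlow : ∀ b < a, f b = 0) (hN : ∀ b ≥ N, f b = 0) (hK : ∀ d ≥ K, f (a + d) = 0) :
    ∑ b ∈ range N, f b = ∑ d ∈ range K, f (a + d) :=
  calc ∑ b ∈ range N, f b = ∑ b ∈ range (a + (N + K)), f b :=
        (eventually_constant_sum hN (by omega)).symm
    _ = ∑ d ∈ range (N + K), f (a + d) := by
        rw [sum_range_add, sum_eq_zero fun b hb => hlow b (mem_range.1 hb), zero_add]
    _ = ∑ d ∈ range K, f (a + d) := eventually_constant_sum hK (by omega)

/-- The `q`-Pochhammer symbol `(X; X)_n` over `ℤ`. It is a nonzero polynomial, hence can be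
cancelled in identities between Gaussian polynomials, whereas `(q; q)_n` may vanish at a root of
unity. -/
def pochPoly (n : ℕ) : Polynomial ℤ := ∏ k ∈ range n, (1 - Polynomial.X ^ (k + 1))

lemma pochPoly_succ (n : ℕ) :
    pochPoly (n + 1) = pochPoly n * (1 - Polynomial.X ^ (n + 1)) :=
  prod_range_succ _ _

lemma pochPoly_ne_zero (n : ℕ) : pochPoly n ≠ 0 := by
  refine prod_ne_zero_iff.2 fun k _ h => ?_
  simpa using congrArg (Polynomial.eval 0) h

lemma gaussPoly_zero_right (n : ℕ) : gaussPoly n 0 = 1 := by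
  cases n <;> rfl

lemma gaussPoly_succ_succ (n k : ℕ) :
    gaussPoly (n + 1) (k + 1) = gaussPoly n k + Polynomial.X ^ (k + 1) * gaussPoly n (k + 1) :=
  rfl

lemma gaussPoly_eq_zero_of_lt {n k : ℕ} (h : n < k) : gaussPoly n k = 0 := by
  induction n generalizing k with
  | zero => obtain ⟨k, rfl⟩ := Nat.exists_eq_succ_of_ne_zero h.ne'; rfl
  | succ n ih =>
    obtain ⟨k, rfl⟩ := Nat.exists_eq_succ_of_ne_zero (Nat.ne_zero_of_lt h)
    rw [gaussPoly_succ_succ, ih (by omega), ih (by omega), mul_zero, add_zero]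

lemma gaussPoly_self (n : ℕ) : gaussPoly n n = 1 := by
  induction n with
  | zero => rfl
  | succ n ih => simp [gaussPoly_succ_succ, ih, gaussPoly_eq_zero_of_lt]

lemma gaussPoly_mul_pochPoly (j k : ℕ) :
    gaussPoly (j + k) k * pochPoly k * pochPoly j = pochPoly (j + k) := by
  induction j generalizing k with
  | zero => simp [gaussPoly_self, pochPoly]
  | succ j ihj =>
    induction k with
    | zero => simp [gaussPoly_zero_right, pochPoly]
    | succ k ihk =>
      have h := ihj (k + 1)
      rw [← add_assoc, add_right_comm] at h
      rw [← add_assoc, gaussPoly_succ_succ, pochPoly_succ (j + 1 + k)]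
      rw [pochPoly_succ j, pochPoly_succ k] at *
      linear_combination (1 - Polynomial.X ^ (k + 1)) * ihk
        + Polynomial.X ^ (k + 1) * (1 - Polynomial.X ^ (j + 1)) * h

lemma gaussPoly_symm_add (j k : ℕ) : gaussPoly (j + k) j = gaussPoly (j + k) k := by
  have h := gaussPoly_mul_pochPoly k j
  rw [add_comm k j] at h
  refine mul_right_cancel₀ (mul_ne_zero (pochPoly_ne_zero k) (pochPoly_ne_zero j)) ?_
  linear_combination h - gaussPoly_mul_pochPoly j k

lemma gaussPoly_mul_gaussPoly (n s k : ℕ) :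
    gaussPoly n (s + k) * gaussPoly (s + k) s = gaussPoly n s * gaussPoly (n - s) k := by
  rcases lt_or_ge n (s + k) with hn | hn
  · rcases lt_or_ge n s with hs | hs
    · simp [gaussPoly_eq_zero_of_lt hn, gaussPoly_eq_zero_of_lt hs]
    · simp [gaussPoly_eq_zero_of_lt hn, gaussPoly_eq_zero_of_lt (show n - s < k by omega)]
  obtain ⟨i, rfl⟩ := Nat.exists_eq_add_of_le' hn
  have h₁ := gaussPoly_mul_pochPoly i (s + k)
  have h₂ := gaussPoly_mul_pochPoly k s
  have h₃ := gaussPoly_mul_pochPoly (i + k) s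
  have h₄ := gaussPoly_mul_pochPoly i k
  rw [add_comm k s] at h₂
  rw [show i + k + s = i + (s + k) by ring] at h₃
  rw [show i + (s + k) - s = i + k by omega]
  refine mul_right_cancel₀ (mul_ne_zero (mul_ne_zero (pochPoly_ne_zero i) (pochPoly_ne_zero s))
    (pochPoly_ne_zero k)) ?_
  linear_combination gaussPoly (i + (s + k)) (s + k) * pochPoly i * h₂ + h₁ - h₃
    - gaussPoly (i + (s + k)) s * pochPoly s * h₄

section QSeries

variable (q : ℂ)

lemma qPoch_succ (x : ℂ) (n : ℕ) : qPoch x q (n + 1) = qPoch x q n * (1 - x * q ^ n) :=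
  prod_range_succ _ _

lemma qPoch_succ' (x : ℂ) (n : ℕ) : qPoch x q (n + 1) = (1 - x) * qPoch (x * q) q n := by
  simp only [qPoch, prod_range_succ', pow_zero, mul_one, pow_succ', mul_assoc, mul_comm (1 - x)]

lemma aeval_pochPoly (n : ℕ) : Polynomial.aeval q (pochPoly n) = qPoch q q n := by
  simp [pochPoly, qPoch, pow_succ']

lemma gbin_zero_right (n : ℕ) : gbin q n 0 = 1 := by
  simp [gbin, gaussPoly_zero_right]

lemma gbin_succ_succ (n k : ℕ) :
    gbin q (n + 1) (k + 1) = gbin q n k + q ^ (k + 1) * gbin q n (k + 1) := by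
  simp [gbin, gaussPoly_succ_succ]

lemma gbin_eq_zero_of_lt {n k : ℕ} (h : n < k) : gbin q n k = 0 := by
  simp [gbin, gaussPoly_eq_zero_of_lt h]

lemma gbin_self (n : ℕ) : gbin q n n = 1 := by
  simp [gbin, gaussPoly_self]

lemma gbin_symm_add (j k : ℕ) : gbin q (j + k) j = gbin q (j + k) k := by
  rw [gbin, gaussPoly_symm_add, gbin]

lemma gbin_mul_qPoch (j k : ℕ) :
    gbin q (j + k) k * qPoch q q k * qPoch q q j = qPoch q q (j + k) := by
  simp only [← aeval_pochPoly, gbin, ← map_mul, gaussPoly_mul_pochPoly]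

lemma gbin_mul_gbin (n s k : ℕ) :
    gbin q n (s + k) * gbin q (s + k) s = gbin q n s * gbin q (n - s) k := by
  simp only [gbin, ← map_mul, gaussPoly_mul_gaussPoly]

lemma gbin_mul_gbin_sub_comm (n j k : ℕ) :
    gbin q n j * gbin q (n - j) k = gbin q n k * gbin q (n - k) j := by
  rw [← gbin_mul_gbin, ← gbin_mul_gbin, gbin_symm_add, add_comm]

lemma gbin_mul_qPoch_eq_qPoch (j k : ℕ) :
    gbin q (j + k) k * qPoch q q j = qPoch (q ^ (k + 1)) q j := by
  have h : gaussPoly (j + k) k * pochPoly j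
      = ∏ i ∈ range j, (1 - (Polynomial.X : Polynomial ℤ) ^ (k + i + 1)) := by
    refine mul_left_cancel₀ (pochPoly_ne_zero k) ?_
    rw [← mul_assoc, mul_comm (pochPoly k), gaussPoly_mul_pochPoly, add_comm]
    exact prod_range_add _ k j
  have heval := congrArg (Polynomial.aeval q) h
  rw [map_mul, aeval_pochPoly, map_prod] at heval
  rw [gbin, heval, qPoch]
  refine prod_congr rfl fun i _ => ?_
  simp only [map_sub, map_one, map_pow, Polynomial.aeval_X]
  ring

lemma gbin_succ_succ' (j k : ℕ) :
    gbin q (j + k + 1) (k + 1) = q ^ j * gbin q (j + k) k + gbin q (j + k) (k + 1) := by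
  cases j with
  | zero => simp [gbin_self, gbin_eq_zero_of_lt]
  | succ j =>
    have h := gbin_symm_add q j (k + 1)
    rw [show j + (k + 1) = j + 1 + k by ring] at h
    rw [add_assoc, ← gbin_symm_add, ← gbin_symm_add, ← h, ← add_assoc, add_right_comm,
      add_right_comm (j + 1) 1 k, gbin_succ_succ]
    ring

/-- The `q`-binomial theorem. -/
lemma sum_gbin_eq_qPoch (x : ℂ) (n : ℕ) :
    ∑ k ∈ range (n + 1), (-1) ^ k * q ^ ((k + 1).choose 2) * x ^ k * gbin q n k
      = qPoch (x * q) q n := by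
  induction n generalizing x with
  | zero => simp [gbin_zero_right, qPoch]
  | succ n ih =>
    have hshift := sum_range_succ'
      (fun k => (-1) ^ k * q ^ ((k + 1).choose 2) * (x * q) ^ k * gbin q n k) (n + 1)
    rw [sum_range_succ, gbin_eq_zero_of_lt q (Nat.lt_succ_self n), mul_zero, add_zero] at hshift
    rw [qPoch_succ', ← ih (x * q), sum_range_succ', sub_mul, one_mul]
    nth_rewrite 1 [hshift]
    rw [mul_sum, add_sub_right_comm, ← sum_sub_distrib]
    simp only [gbin_zero_right, mul_one, pow_zero]
    congr 1
    refine sum_congr rfl fun k _ => ?_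
    rw [Nat.choose_succ_succ' (k + 1) 1, Nat.choose_one_right, gbin_succ_succ]
    ring

/-- The `q`-Vandermonde identity. -/
lemma gbin_add (m n k : ℕ) :
    gbin q (m + n) k
      = ∑ i ∈ range (k + 1), q ^ ((m - i) * (k - i)) * gbin q m i * gbin q n (k - i) := by
  rw [← Nat.sum_antidiagonal_eq_sum_range_succ
    (fun i j => q ^ ((m - i) * j) * gbin q m i * gbin q n j)]
  induction m generalizing k with
  | zero =>
    cases k with
    | zero => simp [gbin_zero_right]
    | succ k => simp [Nat.sum_antidiagonal_succ, gbin_zero_right, gbin_eq_zero_of_lt]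
  | succ m ih =>
    cases k with
    | zero => simp [gbin_zero_right]
    | succ k =>
      rw [add_right_comm, gbin_succ_succ, ih, ih, Nat.sum_antidiagonal_succ,
        Nat.sum_antidiagonal_succ]
      simp only [gbin_succ_succ, gbin_zero_right, mul_add, add_mul, sum_add_distrib, mul_sum,
        Nat.sub_zero, Nat.add_sub_add_right]
      rw [add_left_comm]
      congr 1
      · ring
      congr 1
      refine sum_congr rfl fun p hp => ?_
      rw [HasAntidiagonal.mem_antidiagonal] at hp
      rcases lt_or_ge m (p.1 + 1) with h | h
      · simp [gbin_eq_zero_of_lt q h]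
      · obtain ⟨c, rfl⟩ := Nat.exists_eq_add_of_le h
        rw [add_tsub_cancel_left, show p.1 + 1 + c - p.1 = c + 1 by omega, ← hp]
        ring

lemma sum_gbin_mul_gbin_add (M u i : ℕ) :
    ∑ r ∈ range (M + 1), q ^ (r * (i + r)) * gbin q M r * gbin q u (i + r)
      = gbin q (M + u) (M + i) := by
  rw [gbin_add, eventually_constant_sum (N := M + 1) (n := M + i + 1) _ (by omega),
    ← sum_range_reflect]
  · refine sum_congr rfl fun r hr => ?_
    obtain ⟨c, rfl⟩ := Nat.exists_eq_add_of_le (mem_range_succ_iff.1 hr)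
    rw [show r + c + 1 - 1 - r = c by omega, show r + c - r = c by omega,
      show r + c + i - r = i + c by omega, gbin_symm_add]
  · intro j hj
    rw [gbin_eq_zero_of_lt q hj, mul_zero, zero_mul]

lemma sum_gbin_mul_gbin_mul_gbin {u s i : ℕ} (hiu : i ≤ u) :
    ∑ t ∈ range (u + 1), q ^ ((u - t) * (s - t) + (t - i) * (u + s - i)) *
        gbin q u t * (gbin q s t * gbin q t i)
      = q ^ ((s - i) * (u - i)) * gbin q s i * gbin q (u + s - i) s := by
  rcases lt_or_ge s i with hsi | his
  · rw [gbin_eq_zero_of_lt q hsi, mul_zero, zero_mul]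
    refine sum_eq_zero fun t _ => ?_
    rcases lt_or_ge t i with hti | hit
    · simp [gbin_eq_zero_of_lt q hti]
    · simp [gbin_eq_zero_of_lt q (hsi.trans_le hit)]
  obtain ⟨M, rfl⟩ := Nat.exists_eq_add_of_le his
  obtain ⟨D, rfl⟩ := Nat.exists_eq_add_of_le hiu
  rw [sum_range_eq_sum_range_add (a := i) (K := M + 1)]
  · rw [show i + D + (i + M) - i = M + (i + D) by omega, add_comm i M, ← sum_gbin_mul_gbin_add,
      mul_sum]
    refine sum_congr rfl fun r hr => ?_
    obtain ⟨e, rfl⟩ := Nat.exists_eq_add_of_le (mem_range_succ_iff.1 hr)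
    rcases lt_or_ge D r with hDr | hrD
    · rw [gbin_eq_zero_of_lt q (show i + D < i + r by omega)]; ring
    obtain ⟨f, rfl⟩ := Nat.exists_eq_add_of_le hrD
    rw [gbin_mul_gbin, show i + (r + f) - (i + r) = f by omega,
      show r + e + i - (i + r) = e by omega, show i + r - i = r by omega,
      show r + e + i - i = r + e by omega, show i + (r + f) - i = r + f by omega]
    ring
  · exact fun t ht => by simp [gbin_eq_zero_of_lt q ht]
  · exact fun t ht => by simp [gbin_eq_zero_of_lt q (show i + D < t by omega)]
  · exact fun r hr => by simp [gbin_eq_zero_of_lt q (show i + M < i + r by omega)]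

/-- The `q`-Pfaff–Saalschütz identity. -/
lemma gbin_saalschutz (u s w : ℕ) :
    ∑ t ∈ range (u + 1), q ^ ((u - t) * (s - t)) * gbin q u t * gbin q s t * gbin q (w + t) (u + s)
      = gbin q w u * gbin q w s := by
  have hexpand : ∀ t ∈ range (u + 1), gbin q (w + t) (u + s)
      = ∑ i ∈ range (u + 1),
          q ^ ((t - i) * (u + s - i)) * gbin q t i * gbin q w (u + s - i) := by
    intro t ht
    rw [add_comm, gbin_add]
    refine eventually_constant_sum (fun i hi => ?_) (by omega)
    rw [gbin_eq_zero_of_lt q ((mem_range.1 ht).trans_le hi), mul_zero, zero_mul]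
  have htrinomial : ∀ i ∈ range (u + 1), gbin q (u + s - i) s * gbin q w (u + s - i)
      = gbin q w s * gbin q (w - s) (u - i) := by
    intro i hi
    rw [← gbin_mul_gbin, mul_comm,
      show u + s - i = s + (u - i) by have := mem_range_succ_iff.1 hi; omega]
  calc _ = ∑ i ∈ range (u + 1), (∑ t ∈ range (u + 1),
        q ^ ((u - t) * (s - t) + (t - i) * (u + s - i)) * gbin q u t *
          (gbin q s t * gbin q t i)) * gbin q w (u + s - i) := by
        simp only [sum_mul]
        rw [sum_comm]
        refine sum_congr rfl fun t ht => ?_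
        rw [hexpand t ht, mul_sum]
        exact sum_congr rfl fun i _ => by ring
    _ = ∑ i ∈ range (u + 1), q ^ ((s - i) * (u - i)) * gbin q s i *
          (gbin q w s * gbin q (w - s) (u - i)) := by
        refine sum_congr rfl fun i hi => ?_
        rw [sum_gbin_mul_gbin_mul_gbin q (mem_range_succ_iff.1 hi), mul_assoc, htrinomial i hi]
    _ = gbin q w u * gbin q w s := by
        rcases lt_or_ge w s with hws | hsw
        · simp [gbin_eq_zero_of_lt q hws]
        · conv_rhs => rw [← Nat.add_sub_cancel' hsw, gbin_add, sum_mul]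
          rw [Nat.add_sub_cancel' hsw]
          exact sum_congr rfl fun i _ => by ring

end QSeries

lemma gbin_eq_pow_mul_gbin_inv {q : ℂ} (hq : q ≠ 0) (j k : ℕ) :
    gbin q (j + k) k = q ^ (k * j) * gbin q⁻¹ (j + k) k := by
  induction j generalizing k with
  | zero => simp [gbin_self]
  | succ j ihj =>
    induction k with
    | zero => simp [gbin_zero_right]
    | succ k ihk =>
      have hpow : q ^ (j + 1) * q⁻¹ ^ (j + 1) = 1 := by rw [← mul_pow, mul_inv_cancel₀ hq, one_pow]
      have hpascal := gbin_succ_succ' q⁻¹ (j + 1) k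
      have hsucc := ihj (k + 1)
      rw [← add_assoc, add_right_comm] at hsucc
      rw [← add_assoc, gbin_succ_succ, ihk, hsucc, hpascal]
      linear_combination - q ^ (k * (j + 1)) * gbin q⁻¹ (j + 1 + k) k * hpow

lemma choose_two_add (a j : ℕ) :
    (a + j + 1).choose 2 = (a + 1).choose 2 + (j + 1).choose 2 + a * j := by
  induction j with
  | zero => simp
  | succ j ih =>
    rw [← add_assoc, Nat.choose_succ_succ' (a + j + 1) 1, ih, Nat.choose_succ_succ' (j + 1) 1]
    simp only [Nat.choose_one_right]
    ring

/-- The value of the sum over all variables lying strictly between the two variables, of values `a`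
and `b`, of a level of a block; `t` is the value of the variable of the `m`-chain paired with this
level. -/
def levelVal (q : ℂ) (a b t : ℕ) : ℂ :=
  (-1) ^ a * q ^ (((a + 1).choose 2 : ℤ) - a * ((a : ℤ) - t)) * gbin q b a *
    qPoch (q ^ (t + 1)) q (b - a)

section LevelSums

variable {q : ℂ}

lemma sum_middle_eq_levelVal (hq : q ≠ 0) (a t : ℕ) {b N : ℕ} (hb : b < N) :
    ∑ v ∈ range N, (-1) ^ v * q ^ (((v + 1).choose 2 : ℤ) - ((a : ℤ) - t) * v) *
      gbin q v a * gbin q b v = levelVal q a b t := by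
  rw [sum_range_eq_sum_range_add (a := a) (K := b - a + 1), levelVal, pow_succ,
    ← sum_gbin_eq_qPoch, mul_sum]
  · refine sum_congr rfl fun j _ => ?_
    have hexp : q ^ (((a + j + 1).choose 2 : ℤ) - ((a : ℤ) - t) * (a + j : ℕ))
        = q ^ (((a + 1).choose 2 : ℤ) - a * ((a : ℤ) - t)) *
          (q ^ ((j + 1).choose 2) * (q ^ t) ^ j) := by
      rw [← pow_mul, ← pow_add, ← zpow_natCast, ← zpow_add₀ hq, choose_two_add]
      push_cast
      ring_nf
    rw [hexp, pow_add]
    linear_combination (-1) ^ a * (-1) ^ j *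
      q ^ (((a + 1).choose 2 : ℤ) - a * ((a : ℤ) - t)) *
      (q ^ ((j + 1).choose 2) * (q ^ t) ^ j) * gbin_mul_gbin q b a j
  · exact fun v hv => by simp [gbin_eq_zero_of_lt q hv]
  · exact fun v hv => by simp [gbin_eq_zero_of_lt q (hb.trans_le hv)]
  · exact fun j hj => by simp [gbin_eq_zero_of_lt q (show b < a + j by omega)]

lemma gbin_mul_gbin_mul_gbin_sub (q : ℂ) (b a j d : ℕ) :
    gbin q (a + j) a * gbin q b (a + j + d) * gbin q (a + j + d) (a + j)
      = gbin q b a * gbin q (b - a) d * gbin q (b - a - d) j := by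
  have h := gbin_mul_gbin_sub_comm q (b - a) j d
  rw [Nat.sub_sub b a j] at h
  linear_combination gbin q (a + j) a * gbin_mul_gbin q b (a + j) d
    + gbin q (b - (a + j)) d * gbin_mul_gbin q b a j + gbin q b a * h

lemma sum_lower_of_difference (hq : q ≠ 0) (a' t' t d : ℕ) {b' N : ℕ} (hb : b' < N) :
    ∑ a ∈ range N, (-1) ^ a * q ^ (((a + 1).choose 2 : ℤ) + a * ((t : ℤ) + t' + d - a')
        + d * ((t' : ℤ) - t - a') - t * a') *
      (gbin q a a' * gbin q b' (a + d) * gbin q (a + d) a)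
    = (-1) ^ a' * q ^ (((a' + 1).choose 2 : ℤ) - a' * ((a' : ℤ) - t') + d * ((t' : ℤ) - t)) *
      (gbin q b' a' * gbin q (b' - a') d) * qPoch (q ^ (t' + t + d + 1)) q (b' - a' - d) := by
  rw [sum_range_eq_sum_range_add (a := a') (K := b' - a' - d + 1), pow_succ,
    ← sum_gbin_eq_qPoch, mul_sum]
  · refine sum_congr rfl fun j _ => ?_
    have hexp : q ^ (((a' + j + 1).choose 2 : ℤ) + (a' + j : ℕ) * ((t : ℤ) + t' + d - a')
          + d * ((t' : ℤ) - t - a') - t * a')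
        = q ^ (((a' + 1).choose 2 : ℤ) - a' * ((a' : ℤ) - t') + d * ((t' : ℤ) - t)) *
          (q ^ ((j + 1).choose 2) * (q ^ (t' + t + d)) ^ j) := by
      rw [← pow_mul, ← pow_add, ← zpow_natCast, ← zpow_add₀ hq, choose_two_add]
      push_cast
      ring_nf
    rw [hexp, pow_add, gbin_mul_gbin_mul_gbin_sub]
    ring
  · exact fun a ha => by simp [gbin_eq_zero_of_lt q ha]
  · exact fun a ha => by simp [gbin_eq_zero_of_lt q (show b' < a + d by omega)]
  · exact fun j hj => by simp [gbin_eq_zero_of_lt q (show b' < a' + j + d by omega)]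

lemma sum_gbin_mul_qPoch (q : ℂ) (u M : ℕ) (h : ℕ → ℂ) :
    ∑ t ∈ range (u + 1), ∑ d ∈ range (M + 1), q ^ (d * (u - t)) * gbin q u t * gbin q M d *
        (qPoch (q ^ (t + 1)) q d * qPoch (q ^ (u + t + d + 1)) q (M - d)) * h (t + d)
      = qPoch (q ^ (u + 1)) q M * ∑ s ∈ range (u + M + 1), h s * gbin q (u + M) s := by
  have hterm : ∀ t, ∀ d ∈ range (M + 1), q ^ (d * (u - t)) * gbin q u t * gbin q M d *
        (qPoch (q ^ (t + 1)) q d * qPoch (q ^ (u + t + d + 1)) q (M - d)) * h (t + d)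
      = qPoch q q M * h (t + d) * (q ^ ((u - t) * (t + d - t)) * gbin q u t * gbin q (t + d) t *
          gbin q (u + M + t) (u + (t + d))) := by
    intro t d hd
    obtain ⟨c, rfl⟩ := Nat.exists_eq_add_of_le' (mem_range_succ_iff.1 hd)
    rw [← gbin_mul_qPoch_eq_qPoch, ← gbin_mul_qPoch_eq_qPoch, ← gbin_mul_qPoch q c d,
      add_tsub_cancel_right, add_tsub_cancel_left, add_comm d t,
      show c + (u + t + d) = u + (c + d) + t by ring, show u + t + d = u + (t + d) by ring]
    ring
  calc _ = ∑ t ∈ range (u + 1), ∑ s ∈ range (u + M + 1), qPoch q q M * h s *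
          (q ^ ((u - t) * (s - t)) * gbin q u t * gbin q s t * gbin q (u + M + t) (u + s)) := by
        refine sum_congr rfl fun t ht => ?_
        rw [sum_congr rfl (hterm t)]
        have htu := mem_range_succ_iff.1 ht
        symm
        apply sum_range_eq_sum_range_add
        · exact fun s hs => by simp [gbin_eq_zero_of_lt q hs]
        · exact fun s hs => by simp [gbin_eq_zero_of_lt q (show u + M + t < u + s by omega)]
        · exact fun d hd => by simp [gbin_eq_zero_of_lt q (show u + M + t < u + (t + d) by omega)]
    _ = ∑ s ∈ range (u + M + 1), qPoch q q M * h s *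
          (gbin q (u + M) u * gbin q (u + M) s) := by
        rw [sum_comm]
        exact sum_congr rfl fun s _ => by rw [← mul_sum, gbin_saalschutz]
    _ = _ := by
        rw [← gbin_mul_qPoch_eq_qPoch, add_comm M u, mul_sum]
        exact sum_congr rfl fun s _ => by ring

lemma sum_upper_levelVal (hq : q ≠ 0) (a' t' a t : ℕ) {b' N : ℕ} (hb : b' < N) (h : ℕ → ℂ) :
    ∑ b ∈ range N,
        q ^ (((t' : ℤ) - a') * b + ((a : ℤ) - t) * b + t * ((a : ℤ) - a')) *
          (gbin q a a' * gbin q b' b * gbin q t' t) * levelVal q a b t * h (t + (b - a))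
      = ∑ d ∈ range (b' - a' + 1), gbin q t' t * qPoch (q ^ (t + 1)) q d * h (t + d) *
          ((-1) ^ a * q ^ (((a + 1).choose 2 : ℤ) + a * ((t : ℤ) + t' + d - a')
            + d * ((t' : ℤ) - t - a') - t * a') *
            (gbin q a a' * gbin q b' (a + d) * gbin q (a + d) a)) := by
  rw [sum_range_eq_sum_range_add (a := a) (K := b' - a' + 1)]
  · refine sum_congr rfl fun d _ => ?_
    have hexp : q ^ (((a + 1).choose 2 : ℤ) + a * ((t : ℤ) + t' + d - a')
          + d * ((t' : ℤ) - t - a') - t * a')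
        = q ^ (((t' : ℤ) - a') * (a + d : ℕ) + ((a : ℤ) - t) * (a + d : ℕ) + t * ((a : ℤ) - a')) *
          q ^ (((a + 1).choose 2 : ℤ) - a * ((a : ℤ) - t)) := by
      rw [← zpow_add₀ hq]
      push_cast
      ring_nf
    rw [hexp, levelVal, add_tsub_cancel_left]
    ring
  · exact fun b hba => by simp [levelVal, gbin_eq_zero_of_lt q hba]
  · exact fun b hNb => by simp [gbin_eq_zero_of_lt q (hb.trans_le hNb)]
  · intro d hd
    rcases lt_or_ge a a' with ha | ha
    · simp [gbin_eq_zero_of_lt q ha]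
    · simp [gbin_eq_zero_of_lt q (show b' < a + d by omega)]

lemma sum_lower_upper_levelVal (hq : q ≠ 0) (a' t' : ℕ) {b' N : ℕ} (hb : b' < N) (h : ℕ → ℂ) :
    ∑ a ∈ range N, ∑ b ∈ range N, ∑ t ∈ range (t' + 1),
        q ^ (((t' : ℤ) - a') * b + ((a : ℤ) - t) * b + t * ((a : ℤ) - a')) *
          (gbin q a a' * gbin q b' b * gbin q t' t) * levelVal q a b t * h (t + (b - a))
      = levelVal q a' b' t' *
          ∑ s ∈ range (t' + (b' - a') + 1), h s * gbin q (t' + (b' - a')) s := by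
  calc _ = ∑ t ∈ range (t' + 1), ∑ d ∈ range (b' - a' + 1),
          gbin q t' t * qPoch (q ^ (t + 1)) q d * h (t + d) *
          ((-1) ^ a' * q ^ (((a' + 1).choose 2 : ℤ) - a' * ((a' : ℤ) - t') + d * ((t' : ℤ) - t)) *
            (gbin q b' a' * gbin q (b' - a') d) *
            qPoch (q ^ (t' + t + d + 1)) q (b' - a' - d)) := by
        simp only [sum_comm (s := range N) (t := range (t' + 1)),
          sum_upper_levelVal hq a' t' _ _ hb h]
        refine sum_congr rfl fun t _ => ?_
        rw [sum_comm]
        exact sum_congr rfl fun d _ => by rw [← mul_sum, sum_lower_of_difference hq _ _ _ _ hb]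
    _ = (-1) ^ a' * q ^ (((a' + 1).choose 2 : ℤ) - a' * ((a' : ℤ) - t')) * gbin q b' a' *
          ∑ t ∈ range (t' + 1), ∑ d ∈ range (b' - a' + 1), q ^ (d * (t' - t)) * gbin q t' t *
            gbin q (b' - a') d * (qPoch (q ^ (t + 1)) q d *
              qPoch (q ^ (t' + t + d + 1)) q (b' - a' - d)) * h (t + d) := by
        simp only [mul_sum]
        refine sum_congr rfl fun t ht => sum_congr rfl fun d _ => ?_
        have hexp : (d : ℤ) * ((t' : ℤ) - t) = (d * (t' - t) : ℕ) := by
          push_cast [mem_range_succ_iff.1 ht]; ring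
        rw [zpow_add₀ hq, hexp, zpow_natCast]
        ring
    _ = _ := by rw [sum_gbin_mul_qPoch, levelVal]; ring

end LevelSums

lemma qPoch_self_eq_zero {q : ℂ} {N : ℕ} (hN : 0 < N) (hq : q ^ N = 1) : qPoch q q N = 0 := by
  obtain ⟨M, rfl⟩ := Nat.exists_eq_succ_of_ne_zero hN.ne'
  rw [qPoch_succ, ← pow_succ', hq, sub_self, mul_zero]

lemma pow_mul_qPoch_mul_gbin_succ_sub (q : ℂ) (n j : ℕ) :
    q ^ j * (qPoch q q (n + 1) * gbin q (n + 1) (j + 1) - qPoch q q n * gbin q n (j + 1))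
      = (1 - q ^ (j + 1)) * (q ^ n * qPoch q q n * gbin q n j)
        - q ^ (2 * (j + 1)) * (q ^ n * qPoch q q n * gbin q n (j + 1)) := by
  rw [qPoch_succ]
  rcases lt_or_ge n j with hnj | hjn
  · simp [gbin_succ_succ, gbin_eq_zero_of_lt q hnj, gbin_eq_zero_of_lt q (hnj.trans j.lt_succ_self)]
  obtain ⟨c, rfl⟩ := Nat.exists_eq_add_of_le' hjn
  have hpascal := gbin_succ_succ q (c + j) j
  rw [hpascal]
  linear_combination q ^ j * qPoch q q (c + j) * (gbin_succ_succ' q c j - hpascal)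

lemma sum_pow_mul_qPoch_mul_gbin {q : ℂ} {N : ℕ} (hN : 0 < N) (hq : q ^ N = 1) (k : ℕ) :
    q ^ (k * (k + 1) + 1) * ∑ n ∈ range N, q ^ n * qPoch q q n * gbin q n k = qPoch q q k := by
  induction k with
  | zero =>
    have htele : ∑ n ∈ range N, -q * (q ^ n * qPoch q q n) = qPoch q q N - qPoch q q 0 := by
      rw [← sum_range_sub]
      exact sum_congr rfl fun n _ => by rw [qPoch_succ]; ring
    rw [qPoch_self_eq_zero hN hq, ← mul_sum] at htele
    simp only [gbin_zero_right, mul_one]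
    linear_combination -htele
  | succ j ih =>
    have htele : ∑ n ∈ range N, ((1 - q ^ (j + 1)) * (q ^ n * qPoch q q n * gbin q n j)
        - q ^ (2 * (j + 1)) * (q ^ n * qPoch q q n * gbin q n (j + 1))) = 0 := by
      simp only [← pow_mul_qPoch_mul_gbin_succ_sub, ← mul_sum]
      rw [sum_range_sub fun n => qPoch q q n * gbin q n (j + 1), qPoch_self_eq_zero hN hq,
        gbin_eq_zero_of_lt q (Nat.succ_pos j)]
      ring
    rw [sum_sub_distrib, ← mul_sum, ← mul_sum] at htele
    rw [qPoch_succ, ← ih, ← pow_succ']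
    linear_combination - q ^ (j * (j + 1) + 1) * htele

section MarginalSum

variable {ι κ R : Type*} [DecidableEq ι] [DecidableEq κ]

/-- The sum of `F` over the values in `{0, …, N - 1}` of the variables with index in `s`, the other
variables being those of `n`. -/
def marginalSum [AddCommMonoid R] (N : ℕ) (s : Finset ι) (F : (ι → ℕ) → R) (n : ι → ℕ) : R :=
  ∑ v : s → Fin N, F (Function.updateFinset n s fun i => v i)

section AddCommMonoid

variable [AddCommMonoid R] {N : ℕ} {s t : Finset ι} {F G : (ι → ℕ) → R} {n : ι → ℕ}

lemma marginalSum_empty : marginalSum N ∅ F n = F n := by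
  simp [marginalSum, Function.updateFinset_empty]

lemma marginalSum_singleton (i : ι) :
    marginalSum N {i} F n = ∑ k ∈ range N, F (Function.update n i k) := by
  rw [marginalSum, sum_range, ← (Equiv.funUnique ({i} : Finset ι) (Fin N)).symm.sum_comp]
  refine sum_congr rfl fun k _ => congrArg F ?_
  ext j
  by_cases hj : j = i <;> simp [Function.updateFinset, Function.update, hj]

lemma marginalSum_union (h : Disjoint s t) :
    marginalSum N (s ∪ t) F n = marginalSum N s (marginalSum N t F) n := by
  simp only [marginalSum, ← Fintype.sum_prod_type']
  rw [← (Equiv.piFinsetUnion (fun _ => Fin N) h).sum_comp]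
  refine sum_congr rfl fun ⟨v, w⟩ _ => congrArg F ?_
  ext j
  by_cases hs : j ∈ s
  · have ht : j ∉ t := disjoint_left.1 h hs
    simp [Function.updateFinset, hs, ht, Equiv.piFinsetUnion_left]
  · by_cases ht : j ∈ t <;> simp [Function.updateFinset, hs, ht, Equiv.piFinsetUnion_right]

lemma marginalSum_insert {i : ι} (h : i ∉ s) :
    marginalSum N (insert i s) F n = ∑ k ∈ range N, marginalSum N s F (Function.update n i k) := by
  rw [insert_eq, marginalSum_union (disjoint_singleton_left.2 h), marginalSum_singleton]

lemma marginalSum_congr (h : ∀ n', (∀ j ∉ s, n' j = n j) → F n' = G n') :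
    marginalSum N s F n = marginalSum N s G n :=
  sum_congr rfl fun v _ => h _ fun j hj => by simp [Function.updateFinset, hj]

lemma marginalSum_sum {α : Type*} (A : Finset α) (F : α → (ι → ℕ) → R) :
    marginalSum N s (fun n' => ∑ a ∈ A, F a n') n = ∑ a ∈ A, marginalSum N s (F a) n :=
  sum_comm

lemma marginalSum_update {i : ι} (h : i ∉ s) (k : ℕ) :
    marginalSum N s (fun n' => F (Function.update n' i k)) n
      = marginalSum N s F (Function.update n i k) := by
  refine sum_congr rfl fun v _ => congrArg F ?_
  ext j
  obtain rfl | hj := eq_or_ne j i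
  · simp [Function.updateFinset, h]
  · simp [Function.updateFinset, hj]

lemma marginalSum_map (e : κ ↪ ι) (s : Finset κ) (F : (κ → ℕ) → R) (n : ι → ℕ) :
    marginalSum N (s.map e) (fun n' => F (n' ∘ e)) n = marginalSum N s F (n ∘ e) := by
  induction s using Finset.induction_on generalizing n with
  | empty => simp [marginalSum_empty]
  | insert i s hi ih =>
    rw [map_insert, marginalSum_insert (by simpa using hi), marginalSum_insert hi]
    simp only [ih, Function.update_comp_eq_of_injective _ e.injective]

end AddCommMonoid

lemma marginalSum_const_mul [NonUnitalNonAssocSemiring R] {N : ℕ} {s : Finset ι} (c : R)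
    (F : (ι → ℕ) → R) (n : ι → ℕ) :
    marginalSum N s (fun n' => c * F n') n = c * marginalSum N s F n :=
  (mul_sum _ _ _).symm

end MarginalSum

section MonotoneTuples

variable {L N : ℕ}

lemma extTup_lt (hN : 0 < N) (f : Fin L → Fin N) (i : ℕ) : extTup L N f i < N := by
  rw [extTup]
  split_ifs
  · exact Fin.is_lt _
  · exact hN

lemma sum_extTup {R : Type*} [AddCommMonoid R] (L N : ℕ) (F : (ℕ → ℕ) → R) :
    ∑ f : Fin L → Fin N, F (extTup L N f) = marginalSum N (Icc 1 L) F 0 := by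
  let e : Fin L ≃ Icc 1 L :=
    { toFun := fun i => ⟨i + 1, mem_Icc.2 (by omega)⟩
      invFun := fun j => ⟨j - 1, by have := mem_Icc.1 j.2; omega⟩
      left_inv := fun i => by simp
      right_inv := fun j => Subtype.ext (Nat.sub_add_cancel (mem_Icc.1 j.2).1) }
  rw [marginalSum, ← (e.arrowCongr (Equiv.refl (Fin N))).sum_comp]
  refine sum_congr rfl fun f _ => congrArg F ?_
  ext i
  by_cases h : i ∈ Icc 1 L
  · simp [extTup, Function.updateFinset, e, mem_Icc.1 h]
  · simp [extTup, Function.updateFinset, mem_Icc.not.1 h]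

lemma exists_extTup_succ_lt {f : Fin L → Fin N} (h : ¬ ∀ i j, i ≤ j → f i ≤ f j) :
    ∃ i ∈ Icc 1 (L - 1), extTup L N f (i + 1) < extTup L N f i := by
  obtain _ | L := L
  · exact absurd (fun i => i.elim0) h
  have hmono : ¬ Monotone f := fun hf => h fun i j hij => hf hij
  rw [Fin.monotone_iff_le_succ] at hmono
  push Not at hmono
  obtain ⟨i, hi⟩ := hmono
  refine ⟨i + 1, mem_Icc.2 (by omega), ?_⟩
  have h1 : (i : ℕ) + 1 + 1 ≤ L + 1 := by omega
  have h2 : (i : ℕ) + 1 ≤ L + 1 := by omega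
  simp only [extTup, h1, h2, le_add_iff_nonneg_left, zero_le, and_self, dite_true,
    Nat.add_sub_cancel]
  exact hi

lemma sum_filter_extTup {R : Type*} [AddCommMonoid R] {F : (ℕ → ℕ) → R}
    (hF : ∀ n : ℕ → ℕ, ∀ i ∈ Icc 1 (L - 1), n (i + 1) < n i → F n = 0) :
    ∑ f ∈ univ.filter (fun f : Fin L → Fin N => ∀ i j, i ≤ j → f i ≤ f j), F (extTup L N f)
      = marginalSum N (Icc 1 L) F 0 := by
  rw [← sum_extTup]
  refine sum_subset (filter_subset _ _) fun f _ hf => ?_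
  obtain ⟨i, hi, hlt⟩ := exists_extTup_succ_lt fun h => hf (mem_filter.2 ⟨mem_univ f, h⟩)
  exact hF _ i hi hlt

end MonotoneTuples

section ChainSum

/-- The nested sum over `s' ≥ s_1 ≥ ⋯ ≥ s_r` of
`∏_j q ^ (s_j² + s_j + x_{i+j-1} s_j) [s_{j-1}; s_j]`, where `s_0 = s'`. -/
def chainSum (q : ℂ) (x : ℕ → ℤ) : ℕ → ℕ → ℕ → ℂ
  | 0, _, _ => 1
  | r + 1, i, s' => ∑ s ∈ range (s' + 1),
      q ^ ((s : ℤ) ^ 2 + s + x i * s) * gbin q s' s * chainSum q x r (i + 1) s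

lemma chainSum_zero_right (q : ℂ) (x : ℕ → ℤ) (r i : ℕ) : chainSum q x r i 0 = 1 := by
  induction r generalizing i with
  | zero => rfl
  | succ r ih => simp [chainSum, gbin_zero_right, ih]

lemma chainSum_zero_index (q : ℂ) (r i j s' : ℕ) : chainSum q 0 r i s' = chainSum q 0 r j s' := by
  induction r generalizing i j s' with
  | zero => rfl
  | succ r ih => exact sum_congr rfl fun s _ => congrArg _ (ih (i + 1) (j + 1) s)

lemma sum_range_gbin_mul (q : ℂ) {n N : ℕ} (hn : n < N) (f : ℕ → ℂ) :
    ∑ k ∈ range N, gbin q n k * f k = ∑ k ∈ range (n + 1), gbin q n k * f k := by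
  refine (sum_subset (range_mono hn) fun k _ hk => ?_).symm
  rw [gbin_eq_zero_of_lt q (by simpa using hk), zero_mul]

lemma chainSum_zero_succ (q : ℂ) (r : ℕ) {k N : ℕ} (hk : k < N) :
    chainSum q 0 (r + 1) 1 k
      = ∑ j ∈ range N, q ^ (j ^ 2 + j) * gbin q k j * chainSum q 0 r 1 j := by
  rw [sum_congr rfl fun j _ => by rw [mul_assoc, mul_left_comm], sum_range_gbin_mul q hk, chainSum]
  refine sum_congr rfl fun j _ => ?_
  rw [chainSum_zero_index q r (1 + 1) 1 j, Pi.zero_apply, zero_mul, add_zero]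
  norm_cast
  ring

lemma marginalSum_chain (q : ℂ) (N l : ℕ) (Φ : ℕ → ℂ) (n : ℕ → ℕ) :
    marginalSum N (Icc 1 (l + 1)) (fun n => Φ (n (l + 1)) *
      ∏ i ∈ Icc 1 l, q ^ ((n i) ^ 2 + n i) * gbin q (n (i + 1)) (n i)) n
    = ∑ k ∈ range N, Φ k * chainSum q 0 l 1 k := by
  induction l generalizing Φ n with
  | zero => simp [marginalSum_singleton, chainSum]
  | succ l ih =>
    rw [← insert_Icc_right_eq_Icc_add_one (by omega), marginalSum_insert (by simp)]
    refine sum_congr rfl fun k hk => ?_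
    have htop : ∀ n' : ℕ → ℕ, n' (l + 1 + 1) = k →
        Φ (n' (l + 1 + 1)) *
          ∏ i ∈ Icc 1 (l + 1), q ^ ((n' i) ^ 2 + n' i) * gbin q (n' (i + 1)) (n' i)
        = Φ k * (q ^ ((n' (l + 1)) ^ 2 + n' (l + 1)) * gbin q k (n' (l + 1)) *
          ∏ i ∈ Icc 1 l, q ^ ((n' i) ^ 2 + n' i) * gbin q (n' (i + 1)) (n' i)) := by
      rintro n' rfl
      rw [prod_Icc_succ_top (by omega)]
      ring
    rw [marginalSum_congr fun n' hn' => htop n' (by simp [hn']), marginalSum_const_mul,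
      ih (fun j => q ^ (j ^ 2 + j) * gbin q k j), chainSum_zero_succ q l (mem_range.1 hk)]

lemma sum_monotone_chain (q : ℂ) {N L : ℕ} (hL : 0 < L) (Φ : ℕ → ℂ) :
    ∑ f ∈ univ.filter (fun f : Fin L → Fin N => ∀ i j, i ≤ j → f i ≤ f j),
      Φ (extTup L N f L) * ∏ i ∈ Icc 1 (L - 1), q ^ ((extTup L N f i) ^ 2 + extTup L N f i) *
        gbin q (extTup L N f (i + 1)) (extTup L N f i)
    = ∑ k ∈ range N, Φ k * chainSum q 0 (L - 1) 1 k := by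
  obtain ⟨l, rfl⟩ := Nat.exists_eq_add_one.2 hL
  rw [Nat.add_sub_cancel, ← marginalSum_chain q N l Φ 0]
  refine sum_filter_extTup (F := fun n => Φ (n (l + 1)) *
      ∏ i ∈ Icc 1 l, q ^ ((n i) ^ 2 + n i) * gbin q (n (i + 1)) (n i)) fun n i hi hlt => ?_
  exact mul_eq_zero_of_right _ (prod_eq_zero hi (by rw [gbin_eq_zero_of_lt q hlt, mul_zero]))

lemma sum_two_chains (q : ℂ) {m p N : ℕ} (hm : 0 < m) (hp : 0 < p) (hN : 0 < N) :
    ∑ a ∈ univ.filter (fun a : Fin m → Fin N => ∀ i j, i ≤ j → a i ≤ a j),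
        ∑ b ∈ univ.filter (fun b : Fin p → Fin N =>
              (∀ i j, i ≤ j → b i ≤ b j) ∧ extTup p N b p = extTup m N a m),
          (qPoch q q (extTup m N a m)) ^ 2 * q ^ (extTup m N a m) *
            (∏ i ∈ Icc 1 (m - 1), q ^ ((extTup m N a i) ^ 2 + extTup m N a i) *
              gbin q (extTup m N a (i + 1)) (extTup m N a i)) *
            (∏ j ∈ Icc 1 (p - 1), q ^ ((extTup p N b j) ^ 2 + extTup p N b j) *
              gbin q (extTup p N b (j + 1)) (extTup p N b j))
    = ∑ k ∈ range N, (qPoch q q k) ^ 2 * q ^ k * chainSum q 0 (p - 1) 1 k *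
        chainSum q 0 (m - 1) 1 k := by
  rw [← sum_monotone_chain q hm (fun k => (qPoch q q k) ^ 2 * q ^ k * chainSum q 0 (p - 1) 1 k)]
  refine sum_congr rfl fun a _ => ?_
  have htop := sum_monotone_chain q (N := N) hp
    (fun k => if k = extTup m N a m then (1 : ℂ) else 0)
  simp only [ite_mul, one_mul, zero_mul] at htop
  rw [sum_ite_eq', if_pos (mem_range.2 (extTup_lt hN a m)), ← sum_filter,
    filter_filter] at htop
  rw [← mul_sum, htop]
  ring

end ChainSum

section Exponents

variable {m : ℕ}

lemma epsLO_of_dvd {i : ℕ} (h : m ∣ i) (j : ℕ) : epsLO m i j = 0 := if_pos h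

lemma epsLO_congr {i i' j j' : ℕ} (hi : i ≡ i' [MOD 2 * m]) (hj : j ≡ j' [MOD 2 * m]) :
    epsLO m i j = epsLO m i' j' := by
  have hdiff : (j : ℤ) - i ≡ j' - i' [ZMOD 2 * m] := by
    exact_mod_cast (Int.natCast_modEq_iff.2 hj).sub (Int.natCast_modEq_iff.2 hi)
  simp only [epsLO, hi.dvd_iff (Nat.dvd_mul_left m 2), (hi.add hj).dvd_iff dvd_rfl,
    ((hi.add hj).add_right 1).dvd_iff dvd_rfl, hdiff.dvd_iff, (hdiff.add_right 1).dvd_iff]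

lemma epsLO_two_mul_sub {i : ℕ} (hi : i ≤ 2 * m) (j : ℕ) :
    epsLO m (2 * m - i) j = -epsLO m i j := by
  have hm : m ∣ 2 * m - i ↔ m ∣ i := Nat.dvd_sub_iff_right hi (Nat.dvd_mul_left m 2)
  by_cases h : m ∣ i
  · rw [epsLO_of_dvd h, epsLO_of_dvd (hm.2 h), neg_zero]
  have hadd (e : ℕ) : 2 * m ∣ 2 * m - i + j + e ↔ 2 * (m : ℤ) ∣ j - i + e := by
    rw [← Int.natCast_dvd_natCast]
    push_cast [hi]
    rw [show (2 * m - i + j + e : ℤ) = (j - i + e) + 2 * m by ring, dvd_add_self_right]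
  have hsub (e : ℕ) : 2 * (m : ℤ) ∣ j - (2 * m - i : ℕ) + e ↔ 2 * m ∣ i + j + e := by
    rw [← Int.natCast_dvd_natCast]
    push_cast [hi]
    rw [show (j - (2 * m - i) + e : ℤ) = (i + j + e) - 2 * m by ring, dvd_sub_self_right]
  have hexcl : 2 * m ∣ i + j ∨ 2 * m ∣ i + j + 1 →
      ¬ (2 * (m : ℤ) ∣ j - i ∨ 2 * (m : ℤ) ∣ j - i + 1) := by
    rintro h₁ h₂
    refine h (Int.natCast_dvd_natCast.1 ?_)
    simp only [← Int.natCast_dvd_natCast] at h₁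
    push_cast at h₁
    clear h hm
    rcases h₁ with ⟨c, hc⟩ | ⟨c, hc⟩ <;> rcases h₂ with ⟨d, hd⟩ | ⟨d, hd⟩ <;>
      rw [mul_assoc] at hc hd <;> exact ⟨c - d, by linarith⟩
  have hadd₀ := hadd 0
  have hsub₀ := hsub 0
  have hadd₁ := hadd 1
  have hsub₁ := hsub 1
  simp only [add_zero, Nat.cast_zero, Nat.cast_one] at hadd₀ hsub₀ hadd₁ hsub₁
  simp only [epsLO, h, hm, hadd₀, hsub₀, hadd₁, hsub₁, if_false]
  split_ifs <;> tauto

lemma epsLO_eq {i j : ℕ} (hi : 1 ≤ i) (him : i < m) (hj : j < 2 * m) :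
    epsLO m i j = (if j = 2 * m - i then 1 else 0) + (if j = 2 * m - (i + 1) then 1 else 0)
      - (if j = i then 1 else 0) - (if j = i - 1 then 1 else 0) := by
  have hm : ¬ m ∣ i := Nat.not_dvd_of_pos_of_lt hi him
  have hadd {x : ℕ} (h0 : 0 < x) (h : x < 2 * (2 * m)) : 2 * m ∣ x ↔ x = 2 * m := by
    refine ⟨fun hd => Nat.eq_of_dvd_of_lt_two_mul h0.ne' hd h, fun hx => hx ▸ dvd_rfl⟩
  have hsub {x : ℤ} (h0 : -(2 * m : ℤ) < x) (h : x < 2 * m) : 2 * (m : ℤ) ∣ x ↔ x = 0 :=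
    ⟨fun hd => Int.eq_zero_of_abs_lt_dvd hd (abs_lt.2 ⟨h0, h⟩), fun hx => hx ▸ dvd_zero _⟩
  have h₁ : 2 * m ∣ i + j ↔ j = 2 * m - i := by rw [hadd (by omega) (by omega)]; omega
  have h₂ : 2 * m ∣ i + j + 1 ↔ j = 2 * m - (i + 1) := by rw [hadd (by omega) (by omega)]; omega
  have h₃ : 2 * (m : ℤ) ∣ j - i ↔ j = i := by rw [hsub (by omega) (by omega)]; omega
  have h₄ : 2 * (m : ℤ) ∣ j - i + 1 ↔ j = i - 1 := by rw [hsub (by omega) (by omega)]; omega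
  simp only [epsLO, hm, h₁, h₂, h₃, h₄, if_false]
  split_ifs <;> omega

/-- The exponent sequences met in collapsing blocks: those of period `2m` which are odd under
`i ↦ 2m - i`. -/
structure IsOddPeriodic (m : ℕ) (y : ℕ → ℤ) : Prop where
  periodic : Function.Periodic y (2 * m)
  odd : ∀ i ≤ 2 * m, y (2 * m - i) = -y i

namespace IsOddPeriodic

variable {y : ℕ → ℤ}

lemma apply_add (hy : IsOddPeriodic m y) {o : ℕ} (ho : 2 * m ∣ o) (i : ℕ) : y (i + o) = y i := by
  obtain ⟨c, rfl⟩ := ho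
  rw [mul_comm]
  exact hy.periodic.nat_mul c i

lemma apply_zero (hy : IsOddPeriodic m y) : y 0 = 0 := by
  have h := hy.odd 0 (Nat.zero_le _)
  rw [Nat.sub_zero, ← zero_add (2 * m), hy.periodic 0] at h
  exact self_eq_neg.1 h

lemma apply_half (hy : IsOddPeriodic m y) : y m = 0 := by
  have h := hy.odd m (by omega)
  rw [show 2 * m - m = m by omega] at h
  exact self_eq_neg.1 h

end IsOddPeriodic

lemma isOddPeriodic_zero (m : ℕ) : IsOddPeriodic m 0 := ⟨fun _ => rfl, fun _ _ => rfl⟩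

/-- The exponent which the `2m` variables `n 0, …, n (2m - 1)` of a block contribute to an earlier
variable whose index is `i` modulo `2m`. -/
def crossExp (m : ℕ) (n : ℕ → ℕ) (i : ℕ) : ℤ := ∑ j ∈ range (2 * m), epsLO m i j * n j

lemma IsOddPeriodic.add_crossExp {y : ℕ → ℤ} (hy : IsOddPeriodic m y) (n : ℕ → ℕ) :
    IsOddPeriodic m (y + crossExp m n) where
  periodic i := by
    have hi : i + 2 * m ≡ i [MOD 2 * m] := Nat.add_modEq_right
    simp only [Pi.add_apply, hy.periodic i, crossExp, epsLO_congr hi rfl]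
  odd i hi := by
    simp only [Pi.add_apply, hy.odd i hi, crossExp, epsLO_two_mul_sub hi, neg_mul,
      sum_neg_distrib, neg_add]

lemma crossExp_eq (n : ℕ → ℕ) {i : ℕ} (hi : 1 ≤ i) (him : i < m) :
    crossExp m n i = n (2 * m - i) + n (2 * m - (i + 1)) - n i - n (i - 1) := by
  rw [crossExp, sum_congr rfl fun j hj => by rw [epsLO_eq hi him (mem_range.1 hj)]]
  simp only [sub_mul, add_mul, ite_mul, one_mul, zero_mul, sum_sub_distrib, sum_add_distrib,
    sum_ite_eq', mem_range]
  rw [if_pos (by omega), if_pos (by omega), if_pos (by omega), if_pos (by omega)]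

lemma sum_Ico_epsLO_of_lt (n : ℕ → ℕ) {i : ℕ} (hi : 1 ≤ i) (him : i < m) :
    ∑ j ∈ Ico (i + 1) (2 * m), epsLO m i j * n j = n (2 * m - i) + n (2 * m - (i + 1)) := by
  rw [sum_congr rfl fun j hj => by rw [epsLO_eq hi him (mem_Ico.1 hj).2]]
  simp only [sub_mul, add_mul, ite_mul, one_mul, zero_mul, sum_sub_distrib, sum_add_distrib,
    sum_ite_eq', mem_Ico]
  rw [if_pos (by omega), if_pos (by omega), if_neg (by omega), if_neg (by omega)]
  ring

lemma epsLO_eq_zero_of_lt {i j : ℕ} (hmi : m ≤ i) (hij : i < j) (hj : j < 2 * m) :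
    epsLO m i j = 0 := by
  rcases hmi.eq_or_lt with rfl | hmi
  · exact epsLO_of_dvd dvd_rfl j
  obtain ⟨k, rfl⟩ : ∃ k, i = 2 * m - k := ⟨2 * m - i, by omega⟩
  rw [epsLO_two_mul_sub (by omega), epsLO_eq (by omega) (by omega) hj, if_neg (by omega),
    if_neg (by omega), if_neg (by omega), if_neg (by omega)]
  rfl

lemma gamLO_congr {i i' : ℕ} (h : i ≡ i' [MOD 2 * m]) : gamLO m i = gamLO m i' := by
  rw [gamLO, gamLO, h]

lemma gamLO_of_lt {i : ℕ} (hi : 1 ≤ i) (him : i < m) : gamLO m i = 1 := by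
  rw [gamLO, Nat.mod_eq_of_lt (by omega), if_pos (by omega)]

lemma gamLO_of_le {i : ℕ} (hmi : m ≤ i) (hi : i < 2 * m) : gamLO m i = -1 := by
  rw [gamLO, Nat.mod_eq_of_lt hi, if_neg (by omega)]

lemma gamLO_of_dvd {i : ℕ} (h : m ∣ i) : gamLO m i = -1 := by
  have hmod : m ∣ i % (2 * m) := (Nat.dvd_mod_iff (Nat.dvd_mul_left m 2)).2 h
  refine if_neg fun hi => ?_
  have := Nat.le_of_dvd hi.1 hmod
  omega

end Exponents

section Weights

variable {q : ℂ} {m : ℕ}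

lemma sq_add_self_eq (u : ℕ) : (u : ℤ) ^ 2 + u = 2 * ((u + 1).choose 2 : ℤ) := by
  have h := Nat.add_one_mul_choose_eq u 1
  simp only [Nat.choose_one_right] at h
  zify at h
  linarith

/-- The weight, as a function of `q = ζ⁻¹`, of the step from the `i`-th variable `u` of the
Kontsevich–Zagier sum to the next one `v`. -/
def linkWt (q : ℂ) (m i u v : ℕ) : ℂ :=
  q ^ ((u : ℤ) ^ 2 - gamLO m i * u) * gbin q v u *
    (if m ∣ i then (-1) ^ u * q ^ (-((u + 1).choose 2 : ℤ)) else 1)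

lemma linkWt_of_dvd (hq : q ≠ 0) {i : ℕ} (h : m ∣ i) (u v : ℕ) :
    linkWt q m i u v = (-1) ^ u * q ^ ((u + 1).choose 2 : ℤ) * gbin q v u := by
  have hexp : (u : ℤ) ^ 2 - -1 * u = (u + 1).choose 2 + (u + 1).choose 2 := by
    linarith [sq_add_self_eq u]
  rw [linkWt, if_pos h, gamLO_of_dvd h, hexp, zpow_add₀ hq, zpow_neg]
  have := zpow_ne_zero ((u + 1).choose 2 : ℤ) hq
  field_simp

lemma linkWt_congr {i i' : ℕ} (h : i ≡ i' [MOD 2 * m]) (u v : ℕ) :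
    linkWt q m i u v = linkWt q m i' u v := by
  simp only [linkWt, gamLO_congr h, h.dvd_iff (Nat.dvd_mul_left m 2)]

/-- The `i`-th factor of `chainWt`. -/
def chainFactor (q : ℂ) (m L : ℕ) (y : ℕ → ℤ) (n : ℕ → ℕ) (i : ℕ) : ℂ :=
  linkWt q m i (n i) (n (i + 1)) *
    q ^ (-(y i + ∑ j ∈ Ico (i + 1) L, epsLO m i j * n j) * n i)

/-- The weight of a chain `n 0, …, n L`. The twist `y` records the interaction with the
variables of index at least `L`, which are held fixed; for the Kontsevich–Zagier sum it is `0`. -/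
def chainWt (q : ℂ) (m L : ℕ) (y : ℕ → ℤ) (n : ℕ → ℕ) : ℂ := ∏ i ∈ range L, chainFactor q m L y n i

lemma chainWt_add {o : ℕ} (ho : 2 * m ∣ o) {y : ℕ → ℤ} (hy : IsOddPeriodic m y) (n : ℕ → ℕ) :
    chainWt q m (o + 2 * m) y n = chainWt q m o (y + crossExp m fun i => n (o + i)) n *
      chainWt q m (2 * m) y fun i => n (o + i) := by
  have hmod (j : ℕ) : o + j ≡ j [MOD 2 * m] := by
    simpa using (Nat.modEq_zero_iff_dvd.2 ho).add_right j
  rw [chainWt, prod_range_add]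
  congr 1
  · refine prod_congr rfl fun i hi => ?_
    rw [mem_range] at hi
    have hcross : ∑ j ∈ range (2 * m), epsLO m i (o + j) * n (o + j)
        = crossExp m (fun j => n (o + j)) i :=
      sum_congr rfl fun j _ => by rw [epsLO_congr rfl (hmod j)]
    rw [chainFactor, chainFactor,
      ← sum_Ico_consecutive _ (show i + 1 ≤ o by omega) (Nat.le_add_right o _),
      sum_Ico_eq_sum_range _ o, Nat.add_sub_cancel_left, hcross, Pi.add_apply]
    congr 2
    ring
  · refine prod_congr rfl fun i _ => ?_
    rw [chainFactor, chainFactor, linkWt_congr (hmod i), add_comm o i, hy.apply_add ho,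
      sum_congr rfl fun j _ => by rw [epsLO_congr (i' := i) (add_comm o i ▸ hmod i) rfl],
      add_right_comm, add_comm o (2 * m), ← sum_Ico_add']
    simp only [add_comm o, epsLO_congr rfl (add_comm o _ ▸ hmod _)]

section Block

variable {y : ℕ → ℤ} (n : ℕ → ℕ)

lemma chainFactor_of_lt (hq : q ≠ 0) {i : ℕ} (hi : 1 ≤ i) (him : i < m) :
    chainFactor q m (2 * m) y n i = q ^ ((n i : ℤ) ^ 2 - n i - y i * n i
      - n i * (n (2 * m - i) + n (2 * m - (i + 1)))) * gbin q (n (i + 1)) (n i) := by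
  rw [chainFactor, linkWt, if_neg (Nat.not_dvd_of_pos_of_lt hi him), gamLO_of_lt hi him,
    sum_Ico_epsLO_of_lt n hi him, mul_one, mul_right_comm, ← zpow_add₀ hq]
  congr 2
  ring

lemma chainFactor_of_epsLO_eq_zero {L i : ℕ} (h : ∀ j ∈ Ico (i + 1) L, epsLO m i j = 0) :
    chainFactor q m L y n i = linkWt q m i (n i) (n (i + 1)) * q ^ (-y i * n i) := by
  rw [chainFactor, sum_eq_zero fun j hj => by rw [h j hj, zero_mul], add_zero]

lemma chainFactor_of_dvd (hq : q ≠ 0) (L : ℕ) {i : ℕ} (h : m ∣ i) (hy : y i = 0) :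
    chainFactor q m L y n i
      = (-1) ^ n i * q ^ ((n i + 1).choose 2 : ℤ) * gbin q (n (i + 1)) (n i) := by
  rw [chainFactor_of_epsLO_eq_zero n fun j _ => epsLO_of_dvd h j, linkWt_of_dvd hq h, hy,
    neg_zero, zero_mul, zpow_zero, mul_one]

lemma chainFactor_two_mul_sub (hq : q ≠ 0) (hy : IsOddPeriodic m y) {i : ℕ} (hi : 1 ≤ i)
    (him : i < m) :
    chainFactor q m (2 * m) y n (2 * m - i) = q ^ ((n (2 * m - i) : ℤ) ^ 2 + n (2 * m - i)
      + y i * n (2 * m - i)) * gbin q (n (2 * m - (i - 1))) (n (2 * m - i)) := by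
  have hdvd : ¬ m ∣ 2 * m - i := fun h => Nat.not_dvd_of_pos_of_lt hi him
    ((Nat.dvd_sub_iff_right (by omega) (Nat.dvd_mul_left m 2)).1 h)
  rw [chainFactor_of_epsLO_eq_zero n fun j hj => epsLO_eq_zero_of_lt (by omega)
      (mem_Ico.1 hj).1 (mem_Ico.1 hj).2,
    linkWt, if_neg hdvd, gamLO_of_le (by omega) (by omega), hy.odd i (by omega), mul_one,
    mul_right_comm, ← zpow_add₀ hq, show 2 * m - i + 1 = 2 * m - (i - 1) by omega]
  congr 2
  ring

end Block

end Weights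

section Block

variable {q : ℂ} {m N : ℕ} {y : ℕ → ℤ}

/-- The weight of the variables `n (i + 1), …, n (2m - (i + 1))` of a block, times the sum over the
part of the `m`-chain below its variable of value `t'`, which is paired with `n i, n (2m - i)`. -/
def innerWt (q : ℂ) (m : ℕ) (y : ℕ → ℤ) (r i t' : ℕ) (n : ℕ → ℕ) : ℂ :=
  gbin q (n (i + 1)) (n i) * q ^ (((t' : ℤ) - n i) * n (2 * m - (i + 1))) *
    (∏ l ∈ Ico (i + 1) (2 * m - i), chainFactor q m (2 * m) y n l) *
    chainSum q (y + crossExp m n) r (i + 1) t'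

lemma innerWt_zero (hq : q ≠ 0) (hy : IsOddPeriodic m y) {i : ℕ} (him : i + 1 = m) (t' : ℕ)
    (n : ℕ → ℕ) :
    innerWt q m y 0 i t' n = (-1) ^ n m * q ^ (((n m + 1).choose 2 : ℤ) - ((n i : ℤ) - t') * n m) *
      gbin q (n m) (n i) * gbin q (n (2 * m - i)) (n m) := by
  subst him
  rw [innerWt, show 2 * (i + 1) - i = i + 1 + 1 by omega, Nat.Ico_succ_singleton, prod_singleton,
    chainFactor_of_dvd n hq _ dvd_rfl hy.apply_half, chainSum,
    show 2 * (i + 1) - (i + 1) = i + 1 by omega,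
    sub_eq_add_neg (((n (i + 1) + 1).choose 2 : ℕ) : ℤ),
    zpow_add₀ hq, ← neg_mul, neg_sub]
  ring

lemma innerWt_succ (hq : q ≠ 0) (hy : IsOddPeriodic m y) {r i : ℕ} (him : i + 1 + (r + 1) = m)
    (t' : ℕ) (n : ℕ → ℕ) {a' b' a b : ℕ} (ha' : n i = a') (hb' : n (2 * m - i) = b')
    (ha : n (i + 1) = a) (hb : n (2 * m - (i + 1)) = b) :
    innerWt q m y (r + 1) i t' n = ∑ t ∈ range (t' + 1),
      q ^ (((t' : ℤ) - a') * b + ((a : ℤ) - t) * b + t * ((a : ℤ) - a')) *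
        (gbin q a a' * gbin q b' b * gbin q t' t) *
        q ^ (((t : ℤ) + b - a) ^ 2 + (t + b - a) + y (i + 1) * (t + b - a)) *
        innerWt q m y r (i + 1) t n := by
  have htwist : (y + crossExp m n) (i + 1) = y (i + 1) + b + n (2 * m - (i + 1 + 1)) - a - a' := by
    rw [Pi.add_apply, crossExp_eq n (by omega) (by omega), ha, hb, Nat.add_sub_cancel, ha']
    ring
  rw [innerWt, show 2 * m - i = (2 * m - (i + 1)) + 1 by omega, prod_Ico_succ_top (by omega),
    prod_eq_prod_Ico_succ_bot (show i + 1 < 2 * m - (i + 1) by omega),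
    chainFactor_of_lt n hq (by omega) (by omega),
    chainFactor_two_mul_sub n hq hy (by omega) (by omega), chainSum, mul_sum]
  refine sum_congr rfl fun t _ => ?_
  rw [innerWt, htwist, Nat.add_sub_cancel, ha', hb', ha, hb]
  generalize n (2 * m - (i + 1 + 1)) = b''
  have hexp : q ^ (((t' : ℤ) - a') * b) * q ^ ((a : ℤ) ^ 2 - a - y (i + 1) * a - a * (b + b'')) *
      q ^ ((b : ℤ) ^ 2 + b + y (i + 1) * b) *
      q ^ ((t : ℤ) ^ 2 + t + (y (i + 1) + b + b'' - a - a') * t)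
      = q ^ (((t' : ℤ) - a') * b + ((a : ℤ) - t) * b + t * ((a : ℤ) - a')) *
        q ^ (((t : ℤ) + b - a) ^ 2 + (t + b - a) + y (i + 1) * (t + b - a)) *
        q ^ (((t : ℤ) - a) * b'') := by
    simp only [← zpow_add₀ hq]
    congr 1
    ring
  linear_combination gbin q a a' * gbin q (n (i + 1 + 1)) a * gbin q b' b * gbin q t' t *
    (∏ l ∈ Ico (i + 1 + 1) (2 * m - (i + 1)), chainFactor q m (2 * m) y n l) *
    chainSum q (y + crossExp m n) r (i + 1 + 1) t * hexp

lemma marginalSum_innerWt (hq : q ≠ 0) (hy : IsOddPeriodic m y) {r i : ℕ} (him : i + 1 + r = m)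
    (t' : ℕ) (n : ℕ → ℕ) (hn : n (2 * m - i) < N) :
    marginalSum N (Ico (i + 1) (2 * m - i)) (innerWt q m y r i t') n
      = levelVal q (n i) (n (2 * m - i)) t' *
        chainSum q y r (i + 1) (t' + (n (2 * m - i) - n i)) := by
  induction r generalizing i t' n with
  | zero =>
    rw [show Ico (i + 1) (2 * m - i) = {m} by ext; simp only [mem_Ico, mem_singleton]; omega,
      marginalSum_singleton, ← sum_middle_eq_levelVal hq _ _ hn, chainSum, mul_one]
    refine sum_congr rfl fun v _ => ?_
    rw [innerWt_zero hq hy him, Function.update_self, Function.update_of_ne (by omega),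
      Function.update_of_ne (by omega)]
  | succ r ih =>
    have hlevel : Ico (i + 1) (2 * m - i)
        = insert (i + 1) (insert (2 * m - (i + 1)) (Ico (i + 1 + 1) (2 * m - (i + 1)))) := by
      ext; simp only [mem_Ico, mem_insert]; omega
    have hchain (s' : ℕ) : chainSum q y (r + 1) (i + 1) s' = ∑ s ∈ range (s' + 1),
        q ^ ((s : ℤ) ^ 2 + s + y (i + 1) * s) * chainSum q y r (i + 1 + 1) s * gbin q s' s :=
      sum_congr rfl fun s _ => mul_right_comm _ _ _
    rw [hlevel, marginalSum_insert (by simp only [mem_Ico, mem_insert]; omega), hchain,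
      ← sum_lower_upper_levelVal hq (n i) t' hn fun s =>
        q ^ ((s : ℤ) ^ 2 + s + y (i + 1) * s) * chainSum q y r (i + 1 + 1) s]
    refine sum_congr rfl fun a _ => ?_
    rw [marginalSum_insert (by simp only [mem_Ico]; omega)]
    refine sum_congr rfl fun b hb => ?_
    set ν := Function.update (Function.update n (i + 1) a) (2 * m - (i + 1)) b with hν
    have hνa : ν (i + 1) = a := by
      rw [hν, Function.update_of_ne (by omega), Function.update_self]
    have hνb : ν (2 * m - (i + 1)) = b := Function.update_self ..
    have hνn : ν i = n i ∧ ν (2 * m - i) = n (2 * m - i) := by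
      constructor <;> rw [hν, Function.update_of_ne (by omega), Function.update_of_ne (by omega)]
    rw [marginalSum_congr fun n' hn' => innerWt_succ hq hy him t' n'
        ((hn' i (by simp)).trans hνn.1) ((hn' (2 * m - i) (by rw [mem_Ico]; omega)).trans hνn.2)
        ((hn' (i + 1) (by simp)).trans hνa) ((hn' (2 * m - (i + 1)) (by simp)).trans hνb),
      marginalSum_sum]
    refine sum_congr rfl fun t _ => ?_
    rw [marginalSum_const_mul, ih (by omega) t ν (by rw [hνb]; exact mem_range.1 hb), hνa, hνb]
    rcases lt_or_ge b a with hlt | hge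
    · simp [levelVal, gbin_eq_zero_of_lt q hlt]
    · rw [show (t : ℤ) + b - a = (t + (b - a) : ℕ) by omega]
      ring

lemma marginalSum_block (hq : q ≠ 0) (hm : 0 < m) (hy : IsOddPeriodic m y) (n : ℕ → ℕ)
    (hn : n (2 * m) < N) :
    marginalSum N (Ico 1 (2 * m)) (fun ν => chainWt q m (2 * m) y ν *
        chainSum q (y + crossExp m ν) (m - 1) 1 (n 0)) n
      = q ^ (n 0 ^ 2 + n 0) * gbin q (n (2 * m)) (n 0) ^ 2 * qPoch q q (n (2 * m) - n 0) *
        chainSum q y (m - 1) 1 (n (2 * m)) := by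
  have hfirst (ν : ℕ → ℕ) (hν : ∀ j ∉ Ico 1 (2 * m), ν j = n j) :
      chainWt q m (2 * m) y ν * chainSum q (y + crossExp m ν) (m - 1) 1 (n 0)
        = (-1) ^ n 0 * q ^ ((n 0 + 1).choose 2 : ℤ) * innerWt q m y (m - 1) 0 (n 0) ν := by
    rw [chainWt, range_eq_Ico, prod_eq_prod_Ico_succ_bot (by omega), innerWt,
      chainFactor_of_dvd ν hq _ (dvd_zero m) hy.apply_zero, hν 0 (by simp), sub_self, zero_mul,
      zpow_zero, Nat.sub_zero, zero_add]
    ring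
  rw [marginalSum_congr hfirst, marginalSum_const_mul]
  have hinner := marginalSum_innerWt hq hy (r := m - 1) (i := 0) (by omega) (n 0) n hn
  rw [zero_add, Nat.sub_zero] at hinner
  rw [hinner, levelVal, sub_self, mul_zero, sub_zero]
  rcases lt_or_ge (n (2 * m)) (n 0) with hlt | hge
  · simp [gbin_eq_zero_of_lt q hlt]
  have hsign : (-1 : ℂ) ^ n 0 * (-1) ^ n 0 = 1 := by rw [← mul_pow]; simp
  have hpow : q ^ (n 0 ^ 2 + n 0)
      = q ^ ((n 0 + 1).choose 2 : ℤ) * q ^ ((n 0 + 1).choose 2 : ℤ) := by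
    rw [← zpow_add₀ hq, ← two_mul, ← sq_add_self_eq]
    norm_cast
  have hpoch := gbin_mul_qPoch_eq_qPoch q (n (2 * m) - n 0) (n 0)
  rw [Nat.sub_add_cancel hge] at hpoch
  rw [← hpoch, Nat.add_sub_cancel' hge, hpow]
  linear_combination q ^ ((n 0 + 1).choose 2 : ℤ) * q ^ ((n 0 + 1).choose 2 : ℤ) *
    gbin q (n (2 * m)) (n 0) ^ 2 * qPoch q q (n (2 * m) - n 0) *
    chainSum q y (m - 1) 1 (n (2 * m)) * hsign

end Block

section Chain

variable {q : ℂ} {m o N : ℕ} {y : ℕ → ℤ}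

lemma marginalSum_chainWt_add (ho : 2 * m ∣ o) (hy : IsOddPeriodic m y) (n : ℕ → ℕ) :
    marginalSum N (Ico 1 o) (chainWt q m (o + 2 * m) y) n
      = chainWt q m (2 * m) y (fun i => n (o + i)) *
        marginalSum N (Ico 1 o) (chainWt q m o (y + crossExp m fun i => n (o + i))) n := by
  rw [← marginalSum_const_mul]
  refine marginalSum_congr fun ν hν => ?_
  have hνn : (fun i => ν (o + i)) = fun i => n (o + i) := funext fun i => hν _ (by simp)
  rw [chainWt_add ho hy, hνn, mul_comm]

lemma marginalSum_chainWt_of_lower (hq : q ≠ 0) (hm : 0 < m) (ho : 2 * m ∣ o)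
    (hy : IsOddPeriodic m y) (n : ℕ → ℕ) (hn : n (o + 2 * m) < N) {A : ℂ}
    (hlower : ∀ y' ν, IsOddPeriodic m y' → ν 0 = n 0 → ν o = n o →
      marginalSum N (Ico 1 o) (chainWt q m o y') ν = A * chainSum q y' (m - 1) 1 (n o)) :
    marginalSum N (Ico (o + 1) (o + 2 * m) ∪ Ico 1 o) (chainWt q m (o + 2 * m) y) n
      = A * (q ^ (n o ^ 2 + n o) * gbin q (n (o + 2 * m)) (n o) ^ 2 *
        qPoch q q (n (o + 2 * m) - n o) * chainSum q y (m - 1) 1 (n (o + 2 * m))) := by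
  have hmap : Ico (o + 1) (o + 2 * m) = (Ico 1 (2 * m)).map (addLeftEmbedding o) :=
    (map_add_left_Ico 1 (2 * m) o).symm
  have hblock := marginalSum_block hq hm hy (n ∘ addLeftEmbedding o) (N := N) hn
  rw [← marginalSum_map, ← hmap] at hblock
  rw [marginalSum_union (disjoint_left.2 fun j hj => by simp only [mem_Ico] at hj ⊢; omega)]
  simp only [Function.comp_apply, addLeftEmbedding_apply, add_zero] at hblock
  rw [← hblock, ← marginalSum_const_mul]
  refine marginalSum_congr fun ν hν => ?_
  rw [marginalSum_chainWt_add ho hy,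
    hlower _ ν (hy.add_crossExp _) (hν 0 (by simp)) (hν o (by simp))]
  exact mul_left_comm _ _ _

lemma marginalSum_chainWt (hq : q ≠ 0) (hm : 0 < m) (c : ℕ) (hy : IsOddPeriodic m y) (n : ℕ → ℕ)
    (h0 : n 0 = 0) (hn : n (2 * m * (c + 1)) < N) :
    marginalSum N (Ico 1 (2 * m * (c + 1))) (chainWt q m (2 * m * (c + 1)) y) n
      = qPoch q q (n (2 * m * (c + 1))) * chainSum q 0 c 1 (n (2 * m * (c + 1))) *
        chainSum q y (m - 1) 1 (n (2 * m * (c + 1))) := by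
  induction c generalizing y n with
  | zero =>
    rw [zero_add, mul_one] at hn ⊢
    have hblock := marginalSum_block hq hm hy n hn
    simp only [h0, chainSum_zero_right, mul_one] at hblock
    rw [hblock, gbin_zero_right, chainSum]
    simp
  | succ c ih =>
    rw [show 2 * m * (c + 1 + 1) = 2 * m * (c + 1) + 2 * m by ring] at hn ⊢
    have ho : 0 < 2 * m * (c + 1) := by positivity
    have hdvd : 2 * m ∣ 2 * m * (c + 1) := Nat.dvd_mul_right ..
    generalize 2 * m * (c + 1) = o at *
    have hsplit : Ico 1 (o + 2 * m) = insert o (Ico (o + 1) (o + 2 * m) ∪ Ico 1 o) := by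
      ext; simp only [mem_Ico, mem_insert, mem_union]; omega
    rw [hsplit, marginalSum_insert (by simp), chainSum_zero_succ q c hn, mul_sum, sum_mul]
    refine sum_congr rfl fun k hk => ?_
    have hM : Function.update n o k (o + 2 * m) = n (o + 2 * m) :=
      Function.update_of_ne (by omega) ..
    have ho' : Function.update n o k o = k := Function.update_self ..
    rw [marginalSum_chainWt_of_lower hq hm hdvd hy _ (hM ▸ hn) fun y' ν hy' hν0 hνo => by
      rw [Function.update_of_ne ho.ne] at hν0
      rw [ih hy' ν (hν0.trans h0) (by rw [hνo, ho']; exact mem_range.1 hk), hνo], hM, ho']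
    rcases lt_or_ge (n (o + 2 * m)) k with hlt | hge
    · simp [gbin_eq_zero_of_lt q hlt]
    have hpoch := gbin_mul_qPoch q (n (o + 2 * m) - k) k
    rw [Nat.sub_add_cancel hge] at hpoch
    rw [← hpoch]
    ring

end Chain

section KontsevichZagier

variable {m p N : ℕ}

lemma mul_succ_div_two (u : ℕ) : ((u : ℤ) * ((u : ℤ) + 1)) / 2 = ((u + 1).choose 2 : ℤ) := by
  rw [mul_add_one, ← sq, sq_add_self_eq]
  exact Int.mul_ediv_cancel_left _ two_ne_zero

lemma qPoch_eq_qPoch_inv {q : ℂ} (hq : q ≠ 0) (k : ℕ) :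
    qPoch q q k = (-1) ^ k * q ^ ((k + 1).choose 2 : ℤ) * qPoch q⁻¹ q⁻¹ k := by
  induction k with
  | zero => simp [qPoch]
  | succ k ih =>
    have hinv : q * q ^ k * (q⁻¹ * q⁻¹ ^ k) = 1 := by
      rw [← pow_succ', ← pow_succ', ← mul_pow, mul_inv_cancel₀ hq, one_pow]
    have hpow : q ^ ((k + 1 + 1).choose 2 : ℤ) = q ^ ((k + 1).choose 2 : ℤ) * (q * q ^ k) := by
      rw [← pow_succ', zpow_natCast, zpow_natCast, ← pow_add, Nat.choose_succ_succ' (k + 1) 1,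
        Nat.choose_one_right, add_comm]
    rw [qPoch_succ, ih, qPoch_succ, hpow, pow_succ]
    linear_combination - (-1) ^ k * q ^ ((k + 1).choose 2 : ℤ) * qPoch q⁻¹ q⁻¹ k * hinv

lemma zpow_mul_gbin_inv {q : ℂ} (hq : q ≠ 0) (c : ℤ) (u v : ℕ) :
    q⁻¹ ^ ((u : ℤ) ^ 2 - c * u) * gbin q⁻¹ v u = q ^ (-((u : ℤ) * v) + c * u) * gbin q v u := by
  rcases lt_or_ge v u with hlt | hge
  · simp [gbin_eq_zero_of_lt _ hlt]
  obtain ⟨j, rfl⟩ := Nat.exists_eq_add_of_le' hge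
  rw [gbin_eq_pow_mul_gbin_inv hq, ← mul_assoc, ← zpow_natCast, ← zpow_add₀ hq, inv_zpow']
  congr 2
  push_cast
  ring

/-- The weight of a chain `n 1, …, n L` without a link from `n L` to a further variable. -/
def openChainWt (q : ℂ) (m L : ℕ) (n : ℕ → ℕ) : ℂ :=
  (∏ i ∈ Icc 1 (L - 1), q ^ ((n i : ℤ) ^ 2 - gamLO m i * n i) * gbin q (n (i + 1)) (n i)) *
    (∏ i ∈ Icc 1 L with m ∣ i, (-1) ^ n i * q ^ (-((n i + 1).choose 2 : ℤ))) *
    ∏ i ∈ Icc 1 L with ¬ m ∣ i, ∏ j ∈ Icc (i + 1) L, q ^ (-(epsLO m i j * n i * n j))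

lemma openChainWt_congr {q : ℂ} {L : ℕ} {n n' : ℕ → ℕ} (h : ∀ i ≤ L, n i = n' i) :
    openChainWt q m L n = openChainWt q m L n' := by
  rw [openChainWt, openChainWt]
  congr 1
  · congr 1
    · refine prod_congr rfl fun i hi => ?_
      rw [mem_Icc] at hi
      rw [h i (by omega), h (i + 1) (by omega)]
    · exact prod_congr rfl fun i hi => by rw [h i (mem_Icc.1 (mem_filter.1 hi).1).2]
  · exact prod_congr rfl fun i hi => prod_congr rfl fun j hj => by
      rw [h i (mem_Icc.1 (mem_filter.1 hi).1).2, h j (mem_Icc.1 hj).2]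

lemma prod_zpow_neg {q : ℂ} (hq : q ≠ 0) {ι : Type*} (s : Finset ι) (e : ι → ℤ) :
    ∏ i ∈ s, q ^ (-e i) = q ^ (-∑ i ∈ s, e i) := by
  classical
  induction s using Finset.induction_on with
  | empty => simp
  | insert a s ha ih => rw [prod_insert ha, sum_insert ha, ih, ← zpow_add₀ hq, neg_add]

lemma chainWt_succ {q : ℂ} (hq : q ≠ 0) {L : ℕ} (hL : 0 < L) (hγ : gamLO m L = -1) (n : ℕ → ℕ)
    (h0 : n 0 = 0) :
    chainWt q m (L + 1) 0 n
      = q ^ (n L ^ 2 + n L) * gbin q (n (L + 1)) (n L) * openChainWt q m L n := by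
  have hfactor (i : ℕ) : chainFactor q m (L + 1) 0 n i
      = q ^ ((n i : ℤ) ^ 2 - gamLO m i * n i) * gbin q (n (i + 1)) (n i) *
        (if m ∣ i then (-1) ^ n i * q ^ (-((n i + 1).choose 2 : ℤ)) else 1) *
        (if ¬ m ∣ i then ∏ j ∈ Icc (i + 1) L, q ^ (-(epsLO m i j * n i * n j)) else 1) := by
    rw [chainFactor, linkWt, Pi.zero_apply, zero_add, neg_mul, sum_mul]
    congr 1
    split_ifs with h
    · simp [epsLO_of_dvd h]
    · rw [← prod_zpow_neg hq]
      exact prod_congr rfl fun j _ => by rw [mul_right_comm]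
  have hfirst : chainFactor q m (L + 1) 0 n 0 = 1 := by
    simp [chainFactor_of_dvd n hq _ (dvd_zero m), h0, gbin_zero_right]
  have htop : q ^ ((n L : ℤ) ^ 2 - gamLO m L * n L) = q ^ (n L ^ 2 + n L) := by
    rw [hγ, ← zpow_natCast]
    push_cast
    ring_nf
  obtain ⟨l, rfl⟩ := Nat.exists_eq_add_of_lt hL
  rw [zero_add] at *
  rw [chainWt, range_eq_Ico, prod_eq_prod_Ico_succ_bot (by omega), hfirst, one_mul, zero_add,
    Ico_add_one_right_eq_Icc, prod_congr rfl fun i _ => hfactor i, prod_mul_distrib,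
    prod_mul_distrib, prod_Icc_succ_top (by omega), htop, openChainWt, prod_filter, prod_filter,
    Nat.add_sub_cancel]
  ring

lemma prod_filter_dvd {M : Type*} [CommMonoid M] (hm : 0 < m) (k : ℕ) (g : ℕ → M) :
    ∏ i ∈ Icc 1 (m * k - 1) with m ∣ i, g i = ∏ i ∈ Icc 1 (k - 1), g (m * i) := by
  have hset : {i ∈ Icc 1 (m * k - 1) | m ∣ i} = (Icc 1 (k - 1)).image (m * ·) := by
    ext i
    simp only [mem_filter, mem_image, mem_Icc]
    constructor
    · rintro ⟨⟨h₁, h₂⟩, c, rfl⟩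
      have hc : c < k := lt_of_mul_lt_mul_left (show m * c < m * k by omega) m.zero_le
      exact ⟨c, ⟨Nat.pos_of_mul_pos_left h₁, by omega⟩, rfl⟩
    · rintro ⟨c, hc, rfl⟩
      have h₁ : 0 < m * c := Nat.mul_pos hm hc.1
      have h₂ : m * c < m * k := Nat.mul_lt_mul_of_pos_left (by omega) hm
      exact ⟨⟨h₁, by omega⟩, dvd_mul_right m c⟩
  rw [hset, prod_image fun _ _ _ _ h => Nat.eq_of_mul_eq_mul_left hm h]

/-- The summand of the generalized Kontsevich–Zagier function `F_{m,p}(ζ)`. -/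
def kzSummand (m p : ℕ) (ζ : ℂ) (n : ℕ → ℕ) : ℂ :=
  qPoch ζ ζ (n (2 * m * p - 1)) * (-1 : ℂ) ^ (n (2 * m * p - 1)) *
    ζ ^ (-(((n (2 * m * p - 1) : ℤ) * ((n (2 * m * p - 1) : ℤ) + 1)) / 2)) *
    (∏ i ∈ (Icc 1 (2 * m * p - 1)).filter (fun i => ¬ m ∣ i),
      ∏ j ∈ Icc (i + 1) (2 * m * p - 1), ζ ^ (epsLO m i j * (n i : ℤ) * (n j : ℤ))) *
    (∏ i ∈ Icc 1 (2 * p - 1),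
      (-1 : ℂ) ^ (n (m * i)) * ζ ^ (((n (m * i) : ℤ) * ((n (m * i) : ℤ) + 1)) / 2)) *
    (∏ i ∈ Icc 1 (2 * m * p - 2),
      ζ ^ (-((n i : ℤ) * (n (i + 1) : ℤ)) + gamLO m i * (n i : ℤ)) * gbin ζ (n (i + 1)) (n i))

lemma kzSummand_eq (hm : 0 < m) (p : ℕ) {ζ : ℂ} (hζ : ζ ≠ 0) (n : ℕ → ℕ) :
    kzSummand m p ζ n = qPoch ζ⁻¹ ζ⁻¹ (n (2 * m * p - 1)) *
      openChainWt ζ⁻¹ m (2 * m * p - 1) n := by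
  have hprefactor (k : ℕ) :
      qPoch ζ ζ k * (-1) ^ k * ζ ^ (-((k + 1).choose 2 : ℤ)) = qPoch ζ⁻¹ ζ⁻¹ k := by
    have hsign : (-1 : ℂ) ^ k * (-1) ^ k = 1 := by rw [← mul_pow]; simp
    have hpow := mul_inv_cancel₀ (zpow_ne_zero ((k + 1).choose 2 : ℤ) hζ)
    rw [qPoch_eq_qPoch_inv hζ, zpow_neg]
    linear_combination qPoch ζ⁻¹ ζ⁻¹ k * hsign + qPoch ζ⁻¹ ζ⁻¹ k * (-1) ^ k * (-1) ^ k * hpow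
  simp only [kzSummand, openChainWt, mul_succ_div_two, hprefactor, zpow_mul_gbin_inv hζ]
  simp only [inv_zpow', neg_neg, Nat.sub_sub]
  rw [show 2 * m * p = m * (2 * p) by ring, prod_filter_dvd hm (2 * p)]
  ring

lemma gamLO_sub_one (hm : 0 < m) {L : ℕ} (hL : 0 < L) (h : 2 * m ∣ L) : gamLO m (L - 1) = -1 := by
  obtain ⟨c, rfl⟩ := h
  obtain ⟨d, rfl⟩ := Nat.exists_eq_add_of_lt (Nat.pos_of_mul_pos_left hL)
  have hmod : 2 * m * (0 + d + 1) - 1 ≡ 2 * m - 1 [MOD 2 * m] := by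
    rw [zero_add, mul_add_one, Nat.add_sub_assoc (by omega)]
    exact Nat.mul_add_mod ..
  rw [gamLO_congr hmod, gamLO_of_le (by omega) (by omega)]

lemma mul_kzSummand (hm : 0 < m) (hp : 0 < p) (hN : 0 < N) {ζ : ℂ} (hζ : ζ ^ N = 1) (n : ℕ → ℕ)
    (h0 : n 0 = 0) :
    ζ * kzSummand m p ζ n = ∑ M ∈ range N, ζ⁻¹ ^ M * qPoch ζ⁻¹ ζ⁻¹ M *
      chainWt ζ⁻¹ m (2 * m * p) 0 (Function.update n (2 * m * p) M) := by
  have hζ0 : ζ ≠ 0 := by rintro rfl; simp [hN.ne'] at hζ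
  have hpos : 0 < 2 * m * p := by positivity
  have hγ := gamLO_sub_one hm hpos (Nat.dvd_mul_right (2 * m) p)
  have hL : 0 < 2 * m * p - 1 := by have := Nat.mul_pos hm hp; rw [mul_assoc]; omega
  have hsum := sum_pow_mul_qPoch_mul_gbin hN (q := ζ⁻¹) (by rw [inv_pow, hζ, inv_one])
    (n (2 * m * p - 1))
  rw [kzSummand_eq hm p hζ0, ← hsum]
  obtain ⟨L, hL'⟩ : ∃ L, 2 * m * p = L + 1 := ⟨2 * m * p - 1, by omega⟩
  simp only [hL', Nat.add_sub_cancel] at hγ hL hsum ⊢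
  have hchain (M : ℕ) : chainWt ζ⁻¹ m (L + 1) 0 (Function.update n (L + 1) M)
      = ζ⁻¹ ^ (n L ^ 2 + n L) * gbin ζ⁻¹ M (n L) * openChainWt ζ⁻¹ m L n := by
    have hupdate (i : ℕ) (hi : i ≤ L) : Function.update n (L + 1) M i = n i :=
      Function.update_of_ne (by omega) ..
    rw [chainWt_succ (inv_ne_zero hζ0) hL hγ _ (by rw [hupdate 0 L.zero_le, h0]),
      openChainWt_congr hupdate, hupdate L le_rfl, Function.update_self]
  simp only [hchain]
  calc ζ * (ζ⁻¹ ^ (n L * (n L + 1) + 1) *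
        (∑ M ∈ range N, ζ⁻¹ ^ M * qPoch ζ⁻¹ ζ⁻¹ M * gbin ζ⁻¹ M (n L)) * openChainWt ζ⁻¹ m L n)
      = ζ⁻¹ ^ (n L ^ 2 + n L) * openChainWt ζ⁻¹ m L n *
        ∑ M ∈ range N, ζ⁻¹ ^ M * qPoch ζ⁻¹ ζ⁻¹ M * gbin ζ⁻¹ M (n L) := by
        rw [mul_add_one (n L), ← sq, pow_succ]
        field_simp
    _ = _ := by
        rw [mul_sum]
        exact sum_congr rfl fun M _ => by ring

lemma mul_sum_kzSummand (hm : 0 < m) (hp : 0 < p) (hN : 0 < N) {ζ : ℂ} (hζ : ζ ^ N = 1) :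
    ζ * ∑ f ∈ univ.filter (fun f : Fin (2 * m * p - 1) → Fin N => ∀ i j, i ≤ j → f i ≤ f j),
        kzSummand m p ζ (extTup (2 * m * p - 1) N f)
      = ∑ k ∈ range N, qPoch ζ⁻¹ ζ⁻¹ k ^ 2 * ζ⁻¹ ^ k * chainSum ζ⁻¹ 0 (p - 1) 1 k *
        chainSum ζ⁻¹ 0 (m - 1) 1 k := by
  have hq : ζ⁻¹ ≠ 0 := by rintro h; simp [inv_eq_zero.1 h, hN.ne'] at hζ
  have hzero (n : ℕ → ℕ) (i : ℕ) (hi : i ∈ Icc 1 (2 * m * p - 1 - 1)) (hlt : n (i + 1) < n i) :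
      kzSummand m p ζ n = 0 :=
    mul_eq_zero_of_right _ (prod_eq_zero hi (by rw [gbin_eq_zero_of_lt ζ hlt, mul_zero]))
  rw [sum_filter_extTup hzero, ← marginalSum_const_mul,
    marginalSum_congr fun n' hn' => mul_kzSummand hm hp hN hζ n' (hn' 0 (by simp)),
    marginalSum_sum]
  refine sum_congr rfl fun M hM => ?_
  have hpos : 0 < 2 * m * p := by positivity
  have hIcc : Icc 1 (2 * m * p - 1) = Ico 1 (2 * m * p) := by
    ext; simp only [mem_Icc, mem_Ico]; omega
  obtain ⟨c, rfl⟩ : ∃ c, p = c + 1 := ⟨p - 1, by omega⟩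
  have hblocks := marginalSum_chainWt hq hm c (isOddPeriodic_zero m)
    (Function.update 0 (2 * m * (c + 1)) M) (N := N) (Function.update_of_ne hpos.ne ..)
    (by rw [Function.update_self]; exact mem_range.1 hM)
  rw [Function.update_self] at hblocks
  rw [marginalSum_const_mul, hIcc, marginalSum_update (by simp), hblocks, Nat.add_sub_cancel]
  ring

end KontsevichZagier

/-- Corollary 1.3 (Lovejoy–Osburn): duality at roots of unity,
`F_(m,p)(ζ) = U_(m,p)(-1; ζ⁻¹)`. -/
theorem F_U_duality
    (m p N : ℕ) (hm : 0 < m) (hp : 0 < p) (hN : 0 < N)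
    (ζ : ℂ) (hζ : ζ ^ N = 1) :
    ζ *
      ∑ f ∈ Finset.univ.filter
          (fun f : Fin (2 * m * p - 1) → Fin N => ∀ i j, i ≤ j → f i ≤ f j),
        (let n := extTup (2 * m * p - 1) N f
        qPoch ζ ζ (n (2 * m * p - 1)) * (-1 : ℂ) ^ (n (2 * m * p - 1)) *
          ζ ^ (-(((n (2 * m * p - 1) : ℤ) * ((n (2 * m * p - 1) : ℤ) + 1)) / 2)) *
          (∏ i ∈ (Icc 1 (2 * m * p - 1)).filter (fun i => ¬ m ∣ i),
            ∏ j ∈ Icc (i + 1) (2 * m * p - 1),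
              ζ ^ (epsLO m i j * (n i : ℤ) * (n j : ℤ))) *
          (∏ i ∈ Icc 1 (2 * p - 1),
            (-1 : ℂ) ^ (n (m * i)) *
              ζ ^ (((n (m * i) : ℤ) * ((n (m * i) : ℤ) + 1)) / 2)) *
          (∏ i ∈ Icc 1 (2 * m * p - 2),
            ζ ^ (-((n i : ℤ) * (n (i + 1) : ℤ)) + gamLO m i * (n i : ℤ)) *
              gbin ζ (n (i + 1)) (n i)))
    = ∑ a ∈ Finset.univ.filter
          (fun a : Fin m → Fin N => ∀ i j, i ≤ j → a i ≤ a j),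
        ∑ b ∈ Finset.univ.filter
            (fun b : Fin p → Fin N =>
              (∀ i j, i ≤ j → b i ≤ b j) ∧ extTup p N b p = extTup m N a m),
          (let na := extTup m N a
          let sb := extTup p N b
          (qPoch ζ⁻¹ ζ⁻¹ (na m)) ^ 2 * ζ⁻¹ ^ (na m) *
            (∏ i ∈ Icc 1 (m - 1),
              ζ⁻¹ ^ ((na i) ^ 2 + na i) * gbin ζ⁻¹ (na (i + 1)) (na i)) *
            (∏ j ∈ Icc 1 (p - 1),
              ζ⁻¹ ^ ((sb j) ^ 2 + sb j) * gbin ζ⁻¹ (sb (j + 1)) (sb j))) := by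
  exact (mul_sum_kzSummand hm hp hN hζ).trans (sum_two_chains ζ⁻¹ hm hp hN).symm

end
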